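/- The images in H⁺ of the standard words form a basis of H⁺ as a K-vector space. More precisely, the family of elements u₁u₂⋯u_k T_w of H⁺, indexed without repetition by pairs (u, w) where u assigns to each i ≥ 1 a finite word u_i in the two letters {X_i, Y_i} with u_i empty for all but finitely many i, and w is a permutation of {1,2,…} moving only finitely many points, is linearly independent over K and spans H⁺. -/

import Mathlib

/-!
The proof has two independent halves. Write `T_i^{±1}` for `T_i` and its inverse, and speak of the
letters `X_i`, `Y_i` as lying in leg `i`. The relations are invariant under the exchange
`X ↔ Y`, `T ↔ T⁻¹`, `h ↔ -h`, so that all formulas can be written once with a Boolean parameter: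
with `x_i = X_i`, `t_i = T_i` or `x_i = Y_i`, `t_i = T_i⁻¹`, one has `x_{i+1} = t_i⁻¹ x_i t_i⁻¹`.

*Spanning* (`span_stdWord`). Fix `i` and consider products `p q m` with `p` a word in leg `i`, `q` a
word in leg `i+1` and `m` a combination of standard words using later legs only. Conjugation turns a
letter in leg `i` into one in leg `i+1` and vice versa, at the expense of changing `t_i` to `t_i⁻¹`,
which differ by a scalar; and a letter in leg `i+1` can be moved to the right of one in leg `i` by
means of the cross relation. By induction on the number of letters in the two legs, left
multiplication by `T_i^{±1}` and by letters in leg `i+1` preserves the span of the standard words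
(`E_closed`). When no letters are left, one needs that `T_i^{±1}` preserves the span of the `T_w`;
this is the classical argument from the strong exchange property and Matsumoto's theorem, both of
which are proved here for finitary permutations of `ℕ`. The span of the standard words is therefore
a left ideal containing `1`.

*Linear independence* (`linearIndependent_stdWord`). One constructs the representation that `H⁺`
ought to have if the theorem is true: a space `V` with a basis `e c w` indexed by configurations of
words and permutations, where `T_i` and the letters in leg `i+1` act by the rewriting rules above,
recursively in the number of letters in the legs `i`, `i+1` (`ops`). On empty legs `T_i` acts by the
regular representation `tau` of the Hecke algebra. The defining relations hold by induction on the
number of letters as well: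
* the quadratic relation involves two legs (`two_strand`);
* operators on disjoint pairs of legs commute because an operator which commutes with the letters in
  two legs and with `tau i` commutes with everything constructed from these (`commute_gen`);
* the braid relation, together with the commutation of `T_i` with the letters in leg `i+2` and the
  relations between the letters in legs `i+1` and `i+2`, forms a package of identities on three legs
  (`Sys.Good`) which holds on empty legs and which is inherited when a letter is put into the first
  non-empty leg or into a leg before it.

Acting on the vector with all legs empty and trivial permutation, the standard word `(u, w)` gives
the basis vector `e u w`, and these are distinct for distinct `(u, w)`.
-/

/-!
STATEMENT 0: The standard words form a basis of the stable limit DAHA `H⁺` over `K = ℚ(h)`.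
Generator index `i : ℕ` represents the paper's index `i + 1 ≥ 1`.
-/

noncomputable section

abbrev Kfield : Type := RatFunc ℚ

/-- The variable `h` of `K = ℚ(h)`. -/
def hvar : Kfield := RatFunc.X

/-- Generators of the stable limit DAHA; index `i : ℕ` stands for the paper index `i + 1`. -/
inductive HGen : Type
  | T : ℕ → HGen
  | T' : ℕ → HGen
  | X : ℕ → HGen
  | Y : ℕ → HGen

open FreeAlgebra in
/-- The defining relations of the stable limit DAHA `H⁺`. -/
inductive HRel : FreeAlgebra Kfield HGen → FreeAlgebra Kfield HGen → Prop
  | TT' (i : ℕ) : HRel (ι Kfield (HGen.T i) * ι Kfield (HGen.T' i)) 1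
  | T'T (i : ℕ) : HRel (ι Kfield (HGen.T' i) * ι Kfield (HGen.T i)) 1
  | TminusT' (i : ℕ) :
      HRel (ι Kfield (HGen.T i) - ι Kfield (HGen.T' i))
        (algebraMap Kfield (FreeAlgebra Kfield HGen) hvar)
  | Tcomm (i j : ℕ) (hij : i + 1 < j ∨ j + 1 < i) :
      HRel (ι Kfield (HGen.T i) * ι Kfield (HGen.T j))
        (ι Kfield (HGen.T j) * ι Kfield (HGen.T i))
  | braid (i : ℕ) :
      HRel (ι Kfield (HGen.T i) * ι Kfield (HGen.T (i + 1)) * ι Kfield (HGen.T i))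
        (ι Kfield (HGen.T (i + 1)) * ι Kfield (HGen.T i) * ι Kfield (HGen.T (i + 1)))
  | TXT (i : ℕ) :
      HRel (ι Kfield (HGen.T' i) * ι Kfield (HGen.X i) * ι Kfield (HGen.T' i))
        (ι Kfield (HGen.X (i + 1)))
  | TX (i j : ℕ) (h1 : j ≠ i) (h2 : j ≠ i + 1) :
      HRel (ι Kfield (HGen.T i) * ι Kfield (HGen.X j))
        (ι Kfield (HGen.X j) * ι Kfield (HGen.T i))
  | XX (i j : ℕ) :
      HRel (ι Kfield (HGen.X i) * ι Kfield (HGen.X j))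
        (ι Kfield (HGen.X j) * ι Kfield (HGen.X i))
  | TYT (i : ℕ) :
      HRel (ι Kfield (HGen.T i) * ι Kfield (HGen.Y i) * ι Kfield (HGen.T i))
        (ι Kfield (HGen.Y (i + 1)))
  | TY (i j : ℕ) (h1 : j ≠ i) (h2 : j ≠ i + 1) :
      HRel (ι Kfield (HGen.T i) * ι Kfield (HGen.Y j))
        (ι Kfield (HGen.Y j) * ι Kfield (HGen.T i))
  | YY (i j : ℕ) :
      HRel (ι Kfield (HGen.Y i) * ι Kfield (HGen.Y j))
        (ι Kfield (HGen.Y j) * ι Kfield (HGen.Y i))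
  | cross :
      HRel (ι Kfield (HGen.Y 0) * ι Kfield (HGen.T 0) * ι Kfield (HGen.X 0))
        (ι Kfield (HGen.X 1) * ι Kfield (HGen.Y 0) * ι Kfield (HGen.T 0))

/-- The stable limit DAHA `H⁺`. -/
abbrev Hplus : Type := RingQuot HRel

/-- The image in `H⁺` of a generator. -/
def gen (g : HGen) : Hplus := RingQuot.mkAlgHom Kfield HRel (FreeAlgebra.ι Kfield g)

/-- A letter of the two-letter alphabet `{X_i, Y_i}`: `true ↦ X_i`, `false ↦ Y_i`. -/
def letterElem (i : ℕ) (b : Bool) : Hplus := if b then gen (HGen.X i) else gen (HGen.Y i)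

/-- The element of `H⁺` corresponding to a word `u` in the alphabet `{X_i, Y_i}`. -/
def wordElem (i : ℕ) (u : List Bool) : Hplus := (u.map (letterElem i)).prod

/-- Permutations of `{1, 2, …}` (here realized as `ℕ`) moving only finitely many points. -/
def FinPerm : Type := {w : Equiv.Perm ℕ // {i | w i ≠ i}.Finite}

/-- The adjacent transposition `s_i = (i, i+1)`. -/
def swapAdj (i : ℕ) : Equiv.Perm ℕ := Equiv.swap i (i + 1)

/-- The permutation `s_{i₁} ⋯ s_{i_ℓ}` represented by a list of indices. -/
def wordPerm (l : List ℕ) : Equiv.Perm ℕ := (l.map swapAdj).prod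

/-- The element `T_{i₁} ⋯ T_{i_ℓ}` of `H⁺` attached to a list of indices. -/
def Tword (l : List ℕ) : Hplus := (l.map (fun i => gen (HGen.T i))).prod

instance : Zero (List Bool) := ⟨[]⟩

/-- The ordered product `u₁ u₂ ⋯ u_k` in `H⁺`. -/
def uProd (u : ℕ →₀ List Bool) (k : ℕ) : Hplus :=
  ((List.range k).map (fun i => wordElem i (u i))).prod

/-- The standard word `u₁ u₂ ⋯ u_k T_w` attached to the pair `(u, w)`, where `T_w` is taken
along the chosen reduced expression `rw w`. (Any `k` beyond the support of `u` gives the same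
product, since empty words contribute the factor `1`.) -/
def stdWord (rw : FinPerm → List ℕ) (u : ℕ →₀ List Bool) (w : FinPerm) : Hplus :=
  uProd u (u.support.sup id + 1) * Tword (rw w)

namespace StdBasis

/-! ### Permutations and reduced words -/

/-- A word in the adjacent transpositions is reduced when no shorter word represents the same
permutation. -/
def Red (l : List ℕ) : Prop := ∀ l', wordPerm l' = wordPerm l → l.length ≤ l'.length

lemma wordPerm_cons (i : ℕ) (l : List ℕ) : wordPerm (i :: l) = swapAdj i * wordPerm l := by
  simp [wordPerm]

lemma swapAdj_mul_self (i : ℕ) : swapAdj i * swapAdj i = 1 := by simp [swapAdj]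

lemma swapAdj_mul_cancel (i : ℕ) (w : Equiv.Perm ℕ) : swapAdj i * (swapAdj i * w) = w := by
  rw [← mul_assoc, swapAdj_mul_self, one_mul]

lemma swapAdj_inv (i : ℕ) : (swapAdj i)⁻¹ = swapAdj i := by simp [swapAdj]

lemma inv_swapAdj_mul (i : ℕ) (w : Equiv.Perm ℕ) (a : ℕ) :
    (swapAdj i * w)⁻¹ a = w⁻¹ (swapAdj i a) := by
  rw [mul_inv_rev, swapAdj_inv, Equiv.Perm.mul_apply]

lemma swapAdj_left (i : ℕ) : swapAdj i i = i + 1 := by simp [swapAdj]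
lemma swapAdj_right (i : ℕ) : swapAdj i (i + 1) = i := by simp [swapAdj]
lemma swapAdj_of_ne {i a : ℕ} (h1 : a ≠ i) (h2 : a ≠ i + 1) : swapAdj i a = a :=
  Equiv.swap_apply_of_ne_of_ne h1 h2

lemma swapAdj_lt {a b j : ℕ} (hab : a < b) (h : ¬ (a = j ∧ b = j + 1)) :
    swapAdj j a < swapAdj j b := by
  unfold swapAdj
  simp only [Equiv.swap_apply_def]
  split_ifs <;> omega

/-- The strong exchange property: an inversion of the permutation represented by a word can be
removed by deleting one letter. -/
lemma exchange (l : List ℕ) : ∀ a b : ℕ, a < b → (wordPerm l)⁻¹ b < (wordPerm l)⁻¹ a →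
    ∃ l', l'.length + 1 = l.length ∧ wordPerm l' = Equiv.swap a b * wordPerm l := by
  induction l with
  | nil => intro a b hab h; simp [wordPerm] at h; omega
  | cons j t ih =>
    intro a b hab h
    by_cases hj : a = j ∧ b = j + 1
    · obtain ⟨rfl, rfl⟩ := hj
      exact ⟨t, by simp, by rw [wordPerm_cons]; exact (swapAdj_mul_cancel _ _).symm⟩
    · rw [wordPerm_cons, inv_swapAdj_mul, inv_swapAdj_mul] at h
      obtain ⟨t', h1, h2⟩ := ih _ _ (swapAdj_lt hab hj) h
      refine ⟨j :: t', by simp [h1], ?_⟩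
      rw [wordPerm_cons, wordPerm_cons, h2, ← mul_assoc, ← mul_assoc]
      congr 1
      rw [Equiv.mul_swap_eq_swap_mul]
      simp [swapAdj]

lemma inv_ne (w : Equiv.Perm ℕ) {a b : ℕ} (h : a ≠ b) : w⁻¹ a ≠ w⁻¹ b :=
  fun e => h (w⁻¹.injective e)

lemma Red.of_length_le {l l' : List ℕ} (h : Red l) (hp : wordPerm l' = wordPerm l)
    (hl : l'.length ≤ l.length) : Red l' :=
  fun k hk => hl.trans (h k (hk.trans hp))

lemma Red.tail {i : ℕ} {l : List ℕ} (h : Red (i :: l)) : Red l := by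
  intro k hk
  have := h (i :: k) (by rw [wordPerm_cons, wordPerm_cons, hk])
  simpa using this

/-- A reduced word stays reduced under removal of its first letter only if that letter is an
ascent of the rest. -/
lemma Red.ascent {i : ℕ} {l : List ℕ} (h : Red (i :: l)) :
    (wordPerm l)⁻¹ i < (wordPerm l)⁻¹ (i + 1) := by
  by_contra hc
  have hlt : (wordPerm l)⁻¹ (i + 1) < (wordPerm l)⁻¹ i :=
    lt_of_le_of_ne (not_lt.1 hc) (inv_ne _ (by omega))
  obtain ⟨k, hk1, hk2⟩ := exchange l i (i + 1) (by omega) hlt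
  have := h k (by rw [hk2, wordPerm_cons]; rfl)
  simp at this
  omega

lemma Red.descent {i : ℕ} {l : List ℕ} (h : Red (i :: l)) :
    (wordPerm (i :: l))⁻¹ (i + 1) < (wordPerm (i :: l))⁻¹ i := by
  rw [wordPerm_cons, inv_swapAdj_mul, inv_swapAdj_mul, swapAdj_left, swapAdj_right]
  exact h.ascent

lemma Red.cons {i : ℕ} {l : List ℕ} (h : Red l)
    (hi : (wordPerm l)⁻¹ i < (wordPerm l)⁻¹ (i + 1)) : Red (i :: l) := by
  intro k hk
  obtain ⟨k', h1, h2⟩ := exchange k i (i + 1) (by omega) (by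
    rw [hk, wordPerm_cons, inv_swapAdj_mul, inv_swapAdj_mul, swapAdj_left, swapAdj_right]
    exact hi)
  have := h k' (by rw [h2, hk, wordPerm_cons]; exact swapAdj_mul_cancel _ _)
  simp
  omega

/-- A left descent of a reduced word can be moved to the front. -/
lemma Red.exists_cons {i : ℕ} {l : List ℕ} (h : Red l)
    (hi : (wordPerm l)⁻¹ (i + 1) < (wordPerm l)⁻¹ i) :
    ∃ k, Red (i :: k) ∧ wordPerm (i :: k) = wordPerm l ∧ k.length + 1 = l.length := by
  obtain ⟨k, h1, h2⟩ := exchange l i (i + 1) (by omega) hi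
  have hp : wordPerm (i :: k) = wordPerm l := by
    rw [wordPerm_cons, h2]; exact swapAdj_mul_cancel _ _
  exact ⟨k, h.of_length_le hp (by simp [h1]), hp, h1⟩

lemma swapAdj_comm {i j : ℕ} (h : i + 1 < j) : swapAdj i * swapAdj j = swapAdj j * swapAdj i := by
  ext a
  simp only [Equiv.Perm.mul_apply, swapAdj, Equiv.swap_apply_def]
  split_ifs <;> omega

lemma swapAdj_braid (i : ℕ) : swapAdj i * swapAdj (i + 1) * swapAdj i =
    swapAdj (i + 1) * swapAdj i * swapAdj (i + 1) := by
  ext a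
  simp only [Equiv.Perm.mul_apply, swapAdj, Equiv.swap_apply_def]
  split_ifs <;> omega

/-- Matsumoto's theorem for adjacent transpositions: a family satisfying the braid relations has
the same product along any two reduced words of a permutation. -/
lemma matsumoto {G : Type*} [Monoid G] (t : ℕ → G)
    (hc : ∀ i j, i + 1 < j → t i * t j = t j * t i)
    (hb : ∀ i, t i * t (i + 1) * t i = t (i + 1) * t i * t (i + 1)) :
    ∀ n (l l' : List ℕ), l.length = n → Red l → Red l' → wordPerm l = wordPerm l' →
      (l.map t).prod = (l'.map t).prod := by
  intro n
  induction n with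
  | zero =>
    intro l l' hl h h' hp
    have := h' l hp
    rw [List.length_eq_zero_iff.1 hl] at this ⊢
    rw [List.length_eq_zero_iff.1 (Nat.le_zero.1 this)]
  | succ n ih =>
    -- the case of distinct first letters, in increasing order
    have key : ∀ i j s r, i < j → (i :: s).length = n + 1 → Red (i :: s) → Red (j :: r) →
        wordPerm (i :: s) = wordPerm (j :: r) →
        ((i :: s).map t).prod = ((j :: r).map t).prod := by
      intro i j s r hij hl h h' hp
      have hl' : (j :: r).length = n + 1 :=
        le_antisymm (hl ▸ h' _ hp) (hl ▸ h _ hp.symm)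
      have hs : s.length = n := by simpa using hl
      have hr : r.length = n := by simpa using hl'
      have di := h.descent
      have dj := h'.descent
      rw [← hp] at dj
      have es : wordPerm s = swapAdj i * wordPerm (i :: s) := by
        rw [wordPerm_cons, swapAdj_mul_cancel]
      have er : wordPerm r = swapAdj j * wordPerm (i :: s) := by
        rw [hp, wordPerm_cons, swapAdj_mul_cancel]
      rcases Nat.lt_or_ge (i + 1) j with hlt | hge
      · obtain ⟨k, k1, k2, k3⟩ := h.tail.exists_cons (i := j) (by
          rw [es, inv_swapAdj_mul, inv_swapAdj_mul, swapAdj_of_ne (by omega) (by omega),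
            swapAdj_of_ne (by omega) (by omega)]
          exact dj)
        have e1 := ih s (j :: k) hs h.tail k1 k2.symm
        have p2 : wordPerm (j :: i :: k) = wordPerm (j :: r) := by
          rw [← hp, wordPerm_cons, wordPerm_cons, wordPerm_cons i s, ← k2, wordPerm_cons,
            ← mul_assoc, ← mul_assoc, swapAdj_comm hlt]
        have r2 : Red (j :: i :: k) := h'.of_length_le p2 (by simp; omega)
        have e2 := ih r (i :: k) hr h'.tail r2.tail (by
          rw [wordPerm_cons, wordPerm_cons j r] at p2
          exact (mul_left_cancel p2).symm)
        simp only [List.map_cons, List.prod_cons] at e1 e2 ⊢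
        rw [e1, e2, ← mul_assoc, ← mul_assoc, hc i j hlt]
      · obtain rfl : j = i + 1 := by omega
        obtain ⟨k, k1, k2, k3⟩ := h.tail.exists_cons (i := i + 1) (by
          rw [es, inv_swapAdj_mul, inv_swapAdj_mul, swapAdj_right,
            swapAdj_of_ne (by omega) (by omega)]
          exact dj.trans di)
        have ek : wordPerm k = swapAdj (i + 1) * (swapAdj i * wordPerm (i :: s)) := by
          rw [← es, ← k2, wordPerm_cons, swapAdj_mul_cancel]
        obtain ⟨m, m1, m2, m3⟩ := k1.tail.exists_cons (i := i) (by
          rw [ek, inv_swapAdj_mul, inv_swapAdj_mul, inv_swapAdj_mul, inv_swapAdj_mul,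
            swapAdj_left (i + 1), swapAdj_of_ne (i := i + 1) (a := i) (by omega) (by omega),
            swapAdj_left, swapAdj_of_ne (by omega) (by omega)]
          exact dj)
        have e1 := ih s ((i + 1) :: k) hs h.tail k1 k2.symm
        have e1' := ih ((i + 1) :: k) ((i + 1) :: i :: m) (by simp; omega) k1
          (k1.of_length_le (by rw [wordPerm_cons, m2, ← wordPerm_cons]) (by simp; omega))
          (by rw [wordPerm_cons, ← m2, ← wordPerm_cons])
        have p2 : wordPerm ((i + 1) :: i :: (i + 1) :: m) = wordPerm ((i + 1) :: r) := by
          rw [← hp, wordPerm_cons, wordPerm_cons, wordPerm_cons, wordPerm_cons i s, ← k2,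
            wordPerm_cons _ k, ← m2, wordPerm_cons]
          simp only [← mul_assoc]
          rw [swapAdj_braid]
        have r2 : Red ((i + 1) :: i :: (i + 1) :: m) := h'.of_length_le p2 (by simp; omega)
        have e2 := ih r (i :: (i + 1) :: m) hr h'.tail r2.tail (by
          rw [wordPerm_cons, wordPerm_cons (i + 1) r] at p2
          exact (mul_left_cancel p2).symm)
        simp only [List.map_cons, List.prod_cons] at e1 e1' e2 ⊢
        rw [e1, e1', e2]
        simp only [← mul_assoc]
        rw [hb]
    intro l l' hl h h' hp
    have hl' : l'.length = n + 1 := le_antisymm (hl ▸ h' _ hp) (hl ▸ h _ hp.symm)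
    obtain ⟨i, s, rfl⟩ := List.exists_cons_of_length_eq_add_one hl
    obtain ⟨j, r, rfl⟩ := List.exists_cons_of_length_eq_add_one hl'
    rcases lt_trichotomy i j with hij | rfl | hij
    · exact key i j s r hij hl h h' hp
    · rw [wordPerm_cons, wordPerm_cons] at hp
      simp only [List.map_cons, List.prod_cons]
      rw [ih s r (by simpa using hl) h.tail h'.tail (mul_left_cancel hp)]
    · exact (key j i r s hij hl' h' h hp.symm).symm

/-! ### The module and the recursive construction of the operators -/

/-- A configuration of words, one in each leg; no finiteness of the support is required. -/
abbrev Cfg : Type := ℕ → List Bool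

/-- The space of the regular representation, with a basis vector for each pair of a configuration
and a permutation. -/
abbrev V : Type := (Cfg × Equiv.Perm ℕ) →₀ Kfield

/-- The basis vector of `V` attached to `(c, w)`. -/
def e (c : Cfg) (w : Equiv.Perm ℕ) : V := Finsupp.single (c, w) 1

/-- The endomorphism of `V` with prescribed values on the basis. -/
def lin (f : Cfg → Equiv.Perm ℕ → V) : Module.End Kfield V :=
  Finsupp.linearCombination Kfield (fun p => f p.1 p.2)

@[simp] lemma lin_e (f : Cfg → Equiv.Perm ℕ → V) (c w) : lin f (e c w) = f c w := by
  simp [lin, e]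

/-- The span of the basis vectors whose configuration satisfies `P`. -/
def Sp (P : Cfg → Prop) : Submodule Kfield V :=
  Submodule.span Kfield {v | ∃ c w, P c ∧ v = e c w}

lemma e_mem_Sp {P : Cfg → Prop} {c : Cfg} {w} (h : P c) : e c w ∈ Sp P :=
  Submodule.subset_span ⟨c, w, h, rfl⟩

lemma Sp_mono {P Q : Cfg → Prop} (h : ∀ c, P c → Q c) : Sp P ≤ Sp Q :=
  Submodule.span_mono (by rintro v ⟨c, w, hc, rfl⟩; exact ⟨c, w, h c hc, rfl⟩)

lemma Sp_eqOn {M : Type*} [AddCommGroup M] [Module Kfield M] {P : Cfg → Prop} {f g : V →ₗ[Kfield] M}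
    (h : ∀ c w, P c → f (e c w) = g (e c w)) : ∀ v ∈ Sp P, f v = g v := by
  intro v hv
  refine LinearMap.eqOn_span (f := f) (g := g) ?_ hv
  rintro v ⟨c, w, hc, rfl⟩
  exact h c w hc

lemma Sp_map {P : Cfg → Prop} {f : Module.End Kfield V} {W : Submodule Kfield V}
    (h : ∀ c w, P c → f (e c w) ∈ W) : ∀ v ∈ Sp P, f v ∈ W := by
  intro v hv
  have : Sp P ≤ W.comap f := Submodule.span_le.2 (by
    rintro v ⟨c, w, hc, rfl⟩; exact h c w hc)
  exact this hv

lemma mem_Sp_true (v : V) : v ∈ Sp (fun _ => True) := by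
  induction v using Finsupp.induction_linear with
  | zero => exact Submodule.zero_mem _
  | add f g hf hg => exact Submodule.add_mem _ hf hg
  | single p r =>
    have : Finsupp.single p r = r • e p.1 p.2 := by simp [e]
    rw [this]
    exact Submodule.smul_mem _ _ (e_mem_Sp trivial)

/-- Add a letter in front of the word in leg `i`. -/
def push (i : ℕ) (b : Bool) (c : Cfg) : Cfg := Function.update c i (b :: c i)

/-- Remove the first letter of the word in leg `i`. -/
def pop (i : ℕ) (c : Cfg) : Cfg := Function.update c i (c i).tail

@[simp] lemma push_self (i b c) : push i b c i = b :: c i := by simp [push]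
@[simp] lemma push_ne {i j : ℕ} (b c) (h : j ≠ i) : push i b c j = c j := by simp [push, h]
@[simp] lemma pop_push (i b c) : pop i (push i b c) = c := by simp [push, pop]
lemma push_pop {i : ℕ} {c : Cfg} {b p} (h : c i = b :: p) : push i b (pop i c) = c := by
  simp only [push, pop, Function.update_self, Function.update_idem, h, List.tail_cons]
  rw [← h, Function.update_eq_self]
lemma push_comm {i j : ℕ} (h : i ≠ j) (a b c) :
    push i a (push j b c) = push j b (push i a c) := by
  funext k
  simp only [push, Function.update_apply]
  split_ifs <;> simp_all

lemma cfg_cases (i : ℕ) (c : Cfg) : c i = [] ∨ ∃ b c', c = push i b c' := by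
  rcases h : c i with _ | ⟨b, p⟩
  · exact Or.inl rfl
  · exact Or.inr ⟨b, pop i c, (push_pop h).symm⟩

/-- Left multiplication of the word in leg `i` by a letter. -/
def L (i : ℕ) (b : Bool) : Module.End Kfield V := lin fun c w => e (push i b c) w

@[simp] lemma L_e (i b c w) : L i b (e c w) = e (push i b c) w := by simp [L]

lemma L_comm {i j : ℕ} (h : i ≠ j) (a b) (v : V) : L i a (L j b v) = L j b (L i a v) := by
  refine Sp_eqOn (f := L i a * L j b) (g := L j b * L i a) ?_ v (mem_Sp_true v)
  intro c w _
  simp [push_comm h]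

/-- The regular representation of the Hecke algebra, acting on the permutation component. -/
def tau (i : ℕ) : Module.End Kfield V := lin fun c w =>
  if w⁻¹ i < w⁻¹ (i + 1) then e c (swapAdj i * w) else e c (swapAdj i * w) + hvar • e c w

/-- `h` for `b = true` and `-h` for `b = false`: the exchange `X ↔ Y`, `T ↔ T⁻¹`, `h ↔ -h` is a
symmetry of the relations. -/
def hb (b : Bool) : Kfield := if b then hvar else -hvar

/-- `h` for `b = true` and `0` for `b = false`. -/
def kb (b : Bool) : Kfield := if b then hvar else 0

/-- `U T true = T` and `U T false = T - h`, the latter playing the role of `T⁻¹`. -/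
def U (T : Module.End Kfield V) (b : Bool) : Module.End Kfield V :=
  if b then T else T - hvar • 1

/-- One step of the recursive construction of the operators `T_i` (first component) and of the
letters `X_{i+1}`, `Y_{i+1}` acting on legs `i`, `i+1` (second component). -/
def step (i : ℕ) (o : Module.End Kfield V × (Bool → Module.End Kfield V)) :
    Module.End Kfield V × (Bool → Module.End Kfield V) :=
  (lin fun c w => match c i, c (i + 1) with
    | b :: _, _ => o.2 b (U o.1 b (e (pop i c) w)) + kb b • e c w
    | [], b :: _ => L i b (U o.1 (!b) (e (pop (i + 1) c) w)) + kb (!b) • e c w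
    | [], [] => tau i (e c w),
   fun b => lin fun c w => match c i with
    | [] => L (i + 1) b (e c w)
    | a :: _ => L i a (o.2 b (e (pop i c) w)) +
        if a = b then 0 else hb b • L i (!b) (L i b (U o.1 (!b) (e (pop i c) w))))

/-- The `n`-th approximation to `T_i` and to the letters in leg `i+1`; it is correct on vectors
having at most `n` letters in the legs `i`, `i+1`. -/
def ops (i : ℕ) : ℕ → Module.End Kfield V × (Bool → Module.End Kfield V)
  | 0 => (tau i, fun b => L (i + 1) b)
  | n + 1 => step i (ops i n)

lemma step_T_push (i o b c w) : (step i o).1 (e (push i b c) w) =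
    o.2 b (U o.1 b (e c w)) + kb b • e (push i b c) w := by
  simp [step]

lemma step_T_push' (i o b c w) (h : c i = []) : (step i o).1 (e (push (i + 1) b c) w) =
    L i b (U o.1 (!b) (e c w)) + kb (!b) • e (push (i + 1) b c) w := by
  have : push (i + 1) b c i = [] := by rw [push_ne _ _ (by omega), h]
  simp only [step, lin_e]
  rw [this, push_self, pop_push]

lemma step_T_nil (i o c w) (h : c i = []) (h' : c (i + 1) = []) : (step i o).1 (e c w) =
    tau i (e c w) := by
  simp [step, h, h']

lemma step_Z_nil (i o b c w) (h : c i = []) : (step i o).2 b (e c w) = L (i + 1) b (e c w) := by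
  simp [step, h]

lemma step_Z_push (i o a b c w) : (step i o).2 b (e (push i a c) w) =
    L i a (o.2 b (e c w)) + if a = b then 0 else hb b • L i (!b) (L i b (U o.1 (!b) (e c w))) := by
  simp [step]

/-- The number of letters in the legs belonging to `F`. -/
def wt (F : Finset ℕ) (c : Cfg) : ℕ := ∑ j ∈ F, (c j).length

lemma wt_push {F : Finset ℕ} {i : ℕ} (h : i ∈ F) (b c) : wt F (push i b c) = wt F c + 1 := by
  unfold wt
  rw [← Finset.add_sum_erase _ _ h, ← Finset.add_sum_erase _ _ h]
  simp only [push_self, List.length_cons]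
  rw [Finset.sum_congr rfl (g := fun j => (c j).length)
    (fun j hj => by rw [push_ne _ _ (Finset.ne_of_mem_erase hj)])]
  omega

/-- The span of the basis vectors with at most `n` letters in the legs belonging to `F`. -/
def D (F : Finset ℕ) (n : ℕ) : Submodule Kfield V := Sp fun c => wt F c ≤ n

lemma D_mono (F) {m n : ℕ} (h : m ≤ n) : D F m ≤ D F n := Sp_mono fun _ hc => hc.trans h

lemma L_mem_D {F : Finset ℕ} {i : ℕ} (h : i ∈ F) (b n) : ∀ v ∈ D F n, L i b v ∈ D F (n + 1) :=
  Sp_map fun c w hc => by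
    rw [L_e]; exact e_mem_Sp (by simp only [wt_push h]; omega)

lemma tau_mem_Sp (P i) : ∀ v ∈ Sp P, tau i v ∈ Sp P :=
  Sp_map fun c w hc => by
    simp only [tau, lin_e]
    split_ifs
    · exact e_mem_Sp hc
    · exact Submodule.add_mem _ (e_mem_Sp hc) (Submodule.smul_mem _ _ (e_mem_Sp hc))

lemma U_mem {W : Submodule Kfield V} {T : Module.End Kfield V} {v : V} (b : Bool)
    (h : T v ∈ W) (hv : v ∈ W) : U T b v ∈ W := by
  cases b
  · simpa [U] using W.sub_mem h (W.smul_mem _ hv)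
  · simpa [U] using h

lemma ops_mem {F : Finset ℕ} {i : ℕ} (h : i ∈ F) (h' : i + 1 ∈ F) : ∀ k n,
    (∀ v ∈ D F n, (ops i k).1 v ∈ D F n) ∧ ∀ b, ∀ v ∈ D F n, (ops i k).2 b v ∈ D F (n + 1) := by
  intro k
  induction k with
  | zero => exact fun n => ⟨tau_mem_Sp _ i, fun b => L_mem_D h' b n⟩
  | succ k ih =>
    intro n
    refine ⟨Sp_map fun c w hc => ?_, fun b => Sp_map fun c w hc => ?_⟩
    · have hcm : e c w ∈ D F n := e_mem_Sp hc
      rcases cfg_cases i c with h0 | ⟨b, c, rfl⟩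
      · rcases cfg_cases (i + 1) c with h1 | ⟨b, c, rfl⟩
        · rw [ops, step_T_nil _ _ _ _ h0 h1]; exact tau_mem_Sp _ _ _ hcm
        · rw [push_ne _ _ (by omega)] at h0
          rw [ops, step_T_push' _ _ _ _ _ h0]
          rw [wt_push h'] at hc
          obtain ⟨n, rfl⟩ : ∃ m, n = m + 1 := ⟨n - 1, by omega⟩
          have hm : e c w ∈ D F n := e_mem_Sp (by omega)
          exact Submodule.add_mem _ (L_mem_D h _ _ _ (U_mem _ ((ih n).1 _ hm) hm))
            (Submodule.smul_mem _ _ hcm)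
      · rw [ops, step_T_push]
        rw [wt_push h] at hc
        obtain ⟨n, rfl⟩ : ∃ m, n = m + 1 := ⟨n - 1, by omega⟩
        have hm : e c w ∈ D F n := e_mem_Sp (by omega)
        exact Submodule.add_mem _ ((ih n).2 _ _ (U_mem _ ((ih n).1 _ hm) hm))
            (Submodule.smul_mem _ _ hcm)
    · have hcm : e c w ∈ D F n := e_mem_Sp hc
      rcases cfg_cases i c with h0 | ⟨a, c, rfl⟩
      · rw [ops, step_Z_nil _ _ _ _ _ h0]; exact L_mem_D h' _ _ _ hcm
      · rw [ops, step_Z_push]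
        rw [wt_push h] at hc
        obtain ⟨n, rfl⟩ : ∃ m, n = m + 1 := ⟨n - 1, by omega⟩
        have hm : e c w ∈ D F n := e_mem_Sp (by omega)
        refine Submodule.add_mem _ (L_mem_D h _ _ _ ((ih n).2 _ _ hm)) ?_
        split_ifs
        · exact Submodule.zero_mem _
        · exact Submodule.smul_mem _ _ (L_mem_D h _ _ _ (L_mem_D h _ _ _
            (U_mem _ ((ih n).1 _ hm) hm)))

lemma U_congr {T T' : Module.End Kfield V} {v : V} (b) (h : T v = T' v) : U T b v = U T' b v := by
  cases b <;> simp [U, h]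

/-- The pair of legs on which `T_i` acts. -/
abbrev pr (i : ℕ) : Finset ℕ := {i, i + 1}

lemma wt_pr (i c) : wt (pr i) c = (c i).length + (c (i + 1)).length := by
  simp [wt, pr]

lemma ops_stab (i : ℕ) : ∀ n, (∀ v ∈ D (pr i) n, (ops i (n + 1)).1 v = (ops i n).1 v) ∧
    ∀ b, ∀ v ∈ D (pr i) n, (ops i (n + 1)).2 b v = (ops i n).2 b v := by
  have hi : i ∈ pr i := by simp
  have hi' : i + 1 ∈ pr i := by simp
  intro n
  induction n with
  | zero =>
    refine ⟨Sp_eqOn fun c w hc => ?_, fun b => Sp_eqOn fun c w hc => ?_⟩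
    all_goals
      rw [wt_pr] at hc
      have h0 : c i = [] := List.length_eq_zero_iff.1 (by omega)
      have h1 : c (i + 1) = [] := List.length_eq_zero_iff.1 (by omega)
    · exact step_T_nil _ _ _ _ h0 h1
    · exact step_Z_nil _ _ _ _ _ h0
  | succ n ih =>
    refine ⟨Sp_eqOn fun c w hc => ?_, fun b => Sp_eqOn fun c w hc => ?_⟩
    · rcases cfg_cases i c with h0 | ⟨b, c, rfl⟩
      · rcases cfg_cases (i + 1) c with h1 | ⟨b, c, rfl⟩
        · rw [ops, step_T_nil _ _ _ _ h0 h1, ops, step_T_nil _ _ _ _ h0 h1]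
        · rw [push_ne _ _ (by omega)] at h0
          rw [ops, step_T_push' _ _ _ _ _ h0, ops, step_T_push' _ _ _ _ _ h0]
          rw [wt_push hi'] at hc
          have hm : e c w ∈ D (pr i) n := e_mem_Sp (by omega)
          have := ih.1 _ hm
          rw [ops] at this
          rw [U_congr _ this]
      · rw [ops, step_T_push, ops, step_T_push]
        rw [wt_push hi] at hc
        have hm : e c w ∈ D (pr i) n := e_mem_Sp (by omega)
        have := ih.1 _ hm
        rw [ops] at this
        rw [U_congr _ this]
        have h2 := ih.2 b _ (U_mem b ((ops_mem hi hi' n n).1 _ hm) hm)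
        rw [ops] at h2
        rw [h2]
    · rcases cfg_cases i c with h0 | ⟨a, c, rfl⟩
      · rw [ops, step_Z_nil _ _ _ _ _ h0, ops, step_Z_nil _ _ _ _ _ h0]
      · rw [ops, step_Z_push, ops, step_Z_push]
        rw [wt_push hi] at hc
        have hm : e c w ∈ D (pr i) n := e_mem_Sp (by omega)
        have h1 := ih.1 _ hm
        have h2 := ih.2 b _ hm
        rw [ops] at h1 h2
        rw [h2, U_congr _ h1]

/-- The operator by which the generator `T_i` acts. -/
def T (i : ℕ) : Module.End Kfield V := lin fun c w => (ops i (wt (pr i) c)).1 (e c w)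

/-- The operators by which `X_{i+1}` (`b = true`) and `Y_{i+1}` (`b = false`) act as long as the
legs before `i` are empty. -/
def Z (i : ℕ) (b : Bool) : Module.End Kfield V :=
  lin fun c w => (ops i (wt (pr i) c)).2 b (e c w)

lemma ops_e (i : ℕ) (c w) : ∀ n, wt (pr i) c ≤ n → (ops i n).1 (e c w) = T i (e c w) ∧
    ∀ b, (ops i n).2 b (e c w) = Z i b (e c w) := by
  intro n hn
  induction n, hn using Nat.le_induction with
  | base => simp [T, Z]
  | succ n hn ih =>
    rw [(ops_stab i n).1 _ (e_mem_Sp hn)]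
    refine ⟨ih.1, fun b => ?_⟩
    rw [(ops_stab i n).2 b _ (e_mem_Sp hn), ih.2]

lemma T_eq_ops (i n) : ∀ v ∈ D (pr i) n, T i v = (ops i n).1 v :=
  Sp_eqOn fun c w hc => ((ops_e i c w n hc).1).symm

lemma Z_eq_ops (i b n) : ∀ v ∈ D (pr i) n, Z i b v = (ops i n).2 b v :=
  Sp_eqOn fun c w hc => ((ops_e i c w n hc).2 b).symm

lemma T_mem_D {F : Finset ℕ} {i : ℕ} (h : i ∈ F) (h' : i + 1 ∈ F) (n) :
    ∀ v ∈ D F n, T i v ∈ D F n :=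
  Sp_map fun c w hc => by
    rw [← (ops_e i c w _ le_rfl).1]; exact (ops_mem h h' _ n).1 _ (e_mem_Sp hc)

lemma Z_mem_D {F : Finset ℕ} {i : ℕ} (h : i ∈ F) (h' : i + 1 ∈ F) (b n) :
    ∀ v ∈ D F n, Z i b v ∈ D F (n + 1) :=
  Sp_map fun c w hc => by
    rw [← (ops_e i c w _ le_rfl).2]; exact (ops_mem h h' _ n).2 _ _ (e_mem_Sp hc)

/-- `T_i` and its inverse `T_i - h`. -/
abbrev Tb (i : ℕ) (b : Bool) : Module.End Kfield V := U (T i) b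

lemma Tb_mem_D {F : Finset ℕ} {i : ℕ} (h : i ∈ F) (h' : i + 1 ∈ F) (b n) :
    ∀ v ∈ D F n, Tb i b v ∈ D F n :=
  fun v hv => U_mem _ (T_mem_D h h' n v hv) hv

lemma T_push (i b c w) : T i (e (push i b c) w) =
    Z i b (Tb i b (e c w)) + kb b • e (push i b c) w := by
  have hi : i ∈ pr i := by simp
  have hi' : i + 1 ∈ pr i := by simp
  have hm : e c w ∈ D (pr i) (wt (pr i) c) := e_mem_Sp le_rfl
  rw [T, lin_e, wt_push hi, ops, step_T_push, U_congr _ (T_eq_ops i _ _ hm).symm,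
    ← Z_eq_ops _ _ _ _ (U_mem b (T_mem_D hi hi' _ _ hm) hm)]

lemma T_push' (i b c w) (h : c i = []) : T i (e (push (i + 1) b c) w) =
    L i b (Tb i (!b) (e c w)) + kb (!b) • e (push (i + 1) b c) w := by
  have hi' : i + 1 ∈ pr i := by simp
  have hm : e c w ∈ D (pr i) (wt (pr i) c) := e_mem_Sp le_rfl
  rw [T, lin_e, wt_push hi', ops, step_T_push' _ _ _ _ _ h, U_congr _ (T_eq_ops i _ _ hm).symm]

lemma T_nil (i c w) (h : c i = []) (h' : c (i + 1) = []) : T i (e c w) = tau i (e c w) := by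
  rw [T, lin_e, wt_pr, h, h']; rfl

lemma Z_nil (i b c w) (h : c i = []) : Z i b (e c w) = L (i + 1) b (e c w) := by
  rw [← (ops_e i c w _ (Nat.le_succ _)).2, ops, step_Z_nil _ _ _ _ _ h]

lemma Z_push (i a b c w) : Z i b (e (push i a c) w) =
    L i a (Z i b (e c w)) + if a = b then 0 else hb b • L i (!b) (L i b (Tb i (!b) (e c w))) := by
  have hi : i ∈ pr i := by simp
  have hm : e c w ∈ D (pr i) (wt (pr i) c) := e_mem_Sp le_rfl
  rw [Z, lin_e, wt_push hi, ops, step_Z_push, U_congr _ (T_eq_ops i _ _ hm).symm,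
    ← Z_eq_ops _ _ _ _ hm]
  rfl

lemma eq_of_e {M : Type*} [AddCommGroup M] [Module Kfield M] {f g : V →ₗ[Kfield] M}
    (h : ∀ c w, f (e c w) = g (e c w)) (v : V) : f v = g v :=
  Sp_eqOn (P := fun _ => True) (fun c w _ => h c w) v (mem_Sp_true v)

lemma Tb_add (i b v) : Tb i b v = Tb i (!b) v + hb b • v := by
  cases b <;> simp [U, hb, sub_eq_add_neg]

lemma T_eq_Tb (i b v) : T i v = Tb i (!b) v + kb b • v := by
  cases b <;> simp [U, kb]

/-- Moving `T_i^{∓1}` past the first letter in leg `i`. -/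
lemma Tb_L (i b) (v : V) : Tb i (!b) (L i b v) = Z i b (Tb i b v) := by
  refine eq_of_e (f := Tb i (!b) * L i b) (g := Z i b * Tb i b) (fun c w => ?_) v
  have := T_push i b c w
  rw [T_eq_Tb i b] at this
  simpa using this

lemma Z_L_self (i b) (v : V) : Z i b (L i b v) = L i b (Z i b v) := by
  refine eq_of_e (f := Z i b * L i b) (g := L i b * Z i b) (fun c w => ?_) v
  simp [Z_push]

lemma Z_L_not (i b) (v : V) :
    Z i b (L i (!b) v) = L i (!b) (Z i b v) + hb b • L i (!b) (L i b (Tb i (!b) v)) := by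
  refine eq_of_e (f := Z i b * L i (!b))
    (g := L i (!b) * Z i b + hb b • (L i (!b) * (L i b * Tb i (!b)))) (fun c w => ?_) v
  simp [Z_push]

/-- The span of the basis vectors whose leg `i` is empty. -/
abbrev N (i : ℕ) : Submodule Kfield V := Sp fun c => c i = []

lemma Z_N (i b) : ∀ v ∈ N i, Z i b v = L (i + 1) b v :=
  Sp_eqOn fun c w h => Z_nil i b c w h

/-- Moving `T_i^{±1}` past a letter in leg `i+1` when leg `i` is empty. -/
lemma Tb_L' (i b) : ∀ v ∈ N i, Tb i b (L (i + 1) b v) = L i b (Tb i (!b) v) := by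
  refine Sp_eqOn (f := Tb i b * L (i + 1) b) (g := L i b * Tb i (!b)) fun c w h => ?_
  have := T_push' i b c w h
  rw [T_eq_Tb i (!b)] at this
  simpa using this

/-! ### Relations on two legs -/

lemma hb_not (b : Bool) : hb (!b) = - hb b := by cases b <;> simp [hb]

lemma Tb_comm (i b) (v : V) : Tb i b (Tb i (!b) v) = Tb i (!b) (Tb i b v) := by
  cases b <;> simp [U]

lemma tau_tau (i) (v : V) : tau i (tau i v) = v + hvar • tau i v := by
  refine eq_of_e (f := tau i * tau i) (g := 1 + hvar • tau i) (fun c w => ?_) v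
  have hne : w⁻¹ i ≠ w⁻¹ (i + 1) := inv_ne w (by omega)
  have key : ∀ u : Equiv.Perm ℕ, tau i (e c u) = if u⁻¹ i < u⁻¹ (i + 1)
    then e c (swapAdj i * u) else e c (swapAdj i * u) + hvar • e c u := fun u => by simp [tau]
  simp only [Module.End.mul_apply, LinearMap.add_apply, LinearMap.smul_apply, Module.End.one_apply]
  rw [key w]
  split_ifs with h
  · rw [key, inv_swapAdj_mul, inv_swapAdj_mul, swapAdj_left, swapAdj_right, if_neg (by omega),
      swapAdj_mul_cancel]
  · rw [map_add, map_smul, key, key w, if_neg h, inv_swapAdj_mul, inv_swapAdj_mul, swapAdj_left,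
      swapAdj_right, if_pos (by omega), swapAdj_mul_cancel]

lemma Tb_mul_nil (i b c w) (h : c i = []) (h' : c (i + 1) = []) :
    Tb i b (Tb i (!b) (e c w)) = e c w := by
  have hT : ∀ v ∈ Sp (fun c => c i = [] ∧ c (i + 1) = []), T i v = tau i v :=
    Sp_eqOn fun c w hc => T_nil i c w hc.1 hc.2
  have hm : e c w ∈ Sp (fun c => c i = [] ∧ c (i + 1) = []) := e_mem_Sp ⟨h, h'⟩
  have h1 : T i (T i (e c w)) = e c w + hvar • T i (e c w) := by
    rw [hT _ hm, hT _ (tau_mem_Sp _ _ _ hm), tau_tau]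
  cases b <;> simp [U, h1]

/-- Moving `T_i^{±1}` past the first letter in leg `i`, in the expanding direction. -/
lemma Tb_L_self (i b) (v : V) :
    Tb i b (L i b v) = Z i b (Tb i b v) + hb b • L i b v := by
  rw [Tb_add, Tb_L]

/-- The quadratic relation and the rule for moving `T_i^{±1}` past the letter in leg `i+1`, by
simultaneous induction on the number of letters in the legs `i`, `i+1`. -/
lemma two_strand (i : ℕ) : ∀ n,
    (∀ b, ∀ v ∈ D (pr i) n, Tb i b (Tb i (!b) v) = v) ∧
    (∀ b, ∀ v ∈ D (pr i) n, Tb i b (Z i b v) = L i b (Tb i (!b) v)) := by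
  have hi : i ∈ pr i := by simp
  have hi' : i + 1 ∈ pr i := by simp
  have hE : ∀ n, (∀ b, ∀ v ∈ D (pr i) n, Tb i b (Tb i (!b) v) = v) →
      (∀ b, ∀ v ∈ D (pr i) n, Tb i b (Z i b v) = L i b (Tb i (!b) v)) →
      ∀ b, ∀ v ∈ D (pr i) (n + 1), Tb i b (Z i b v) = L i b (Tb i (!b) v) := by
    intro n hQ hE b
    refine Sp_eqOn (f := Tb i b * Z i b) (g := L i b * Tb i (!b)) fun c w hc => ?_
    simp only [Module.End.mul_apply]
    rcases cfg_cases i c with h0 | ⟨a, c, rfl⟩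
    · rw [Z_nil _ _ _ _ h0, Tb_L' i b _ (e_mem_Sp h0)]
    · rw [wt_push hi] at hc
      have hm : e c w ∈ D (pr i) n := e_mem_Sp (by omega)
      rw [← L_e]
      generalize e c w = v at hm
      rcases eq_or_ne a b with rfl | hab
      · rw [Z_L_self, Tb_L_self, hE a v hm, Tb_L, Z_L_self, Tb_add i a v]
        simp only [map_add, map_smul]
      · obtain rfl : a = !b := by cases a <;> cases b <;> simp_all
        have hm' := Tb_mem_D hi hi' (!b) n v hm
        have e1 := Tb_L i (!b) (Z i b v)
        have e2 := Tb_L i (!b) (L i b (Tb i (!b) v))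
        have e3 := Tb_L i (!b) v
        have e4 := Z_L_not i (!b) (Tb i (!b) v)
        have e5 := Tb_add i b (L i (!b) v)
        have e6 := Tb_add i b (Z i b v)
        simp only [Bool.not_not] at e1 e2 e3 e4
        rw [Z_L_not, map_add, map_smul, e1, e2, Tb_L, hQ b v hm, ← map_smul, ← map_add, ← e6,
          hE b v hm, e4, hQ b v hm, ← e3, e5, hb_not, map_add, map_smul]
        rw [neg_smul]; abel
  intro n
  induction n with
  | zero =>
    refine ⟨fun b => Sp_eqOn (f := Tb i b * Tb i (!b)) (g := 1) fun c w hc => ?_,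
      fun b => Sp_eqOn (f := Tb i b * Z i b) (g := L i b * Tb i (!b)) fun c w hc => ?_⟩
    all_goals
      rw [wt_pr] at hc
      have h0 : c i = [] := List.length_eq_zero_iff.1 (by omega)
      have h1 : c (i + 1) = [] := List.length_eq_zero_iff.1 (by omega)
    · exact Tb_mul_nil i b c w h0 h1
    · simp only [Module.End.mul_apply]
      rw [Z_nil _ _ _ _ h0, Tb_L' i b _ (e_mem_Sp h0)]
  | succ n ih =>
    refine ⟨?_, hE n ih.1 ih.2⟩
    intro b
    refine Sp_eqOn (f := Tb i b * Tb i (!b)) (g := 1) fun c w hc => ?_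
    simp only [Module.End.mul_apply, Module.End.one_apply]
    rcases cfg_cases i c with h0 | ⟨a, c, rfl⟩
    · rcases cfg_cases (i + 1) c with h1 | ⟨a, c, rfl⟩
      · exact Tb_mul_nil i b c w h0 h1
      · rw [push_ne _ _ (by omega)] at h0
        rw [wt_push hi'] at hc
        have hm : e c w ∈ D (pr i) n := e_mem_Sp (by omega)
        have hN : e c w ∈ N i := e_mem_Sp h0
        rw [← L_e]
        generalize e c w = v at hm hN
        have : Tb i (!a) (Tb i a (L (i + 1) a v)) = L (i + 1) a v := by
          rw [Tb_L' i a v hN, Tb_L, ih.1 a v hm, Z_N _ _ _ hN]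
        rcases eq_or_ne a b with rfl | hab
        · rw [Tb_comm, this]
        · obtain rfl : a = !b := by cases a <;> cases b <;> simp_all
          simpa using this
    · rw [wt_push hi] at hc
      have hm : e c w ∈ D (pr i) n := e_mem_Sp (by omega)
      rw [← L_e]
      generalize e c w = v at hm
      have : Tb i a (Tb i (!a) (L i a v)) = L i a v := by
        have hq := ih.1 (!a) v hm
        rw [Bool.not_not] at hq
        rw [Tb_L, ih.2 a _ (Tb_mem_D hi hi' a n v hm), hq]
      rcases eq_or_ne a b with rfl | hab
      · exact this
      · obtain rfl : a = !b := by cases a <;> cases b <;> simp_all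
        rw [Tb_comm]
        simpa using this

lemma exists_mem_D (F : Finset ℕ) (v : V) : ∃ n, v ∈ D F n := by
  induction v using Finsupp.induction_linear with
  | zero => exact ⟨0, Submodule.zero_mem _⟩
  | add f g hf hg =>
    obtain ⟨m, hm⟩ := hf
    obtain ⟨n, hn⟩ := hg
    exact ⟨max m n, Submodule.add_mem _ (D_mono F (le_max_left _ _) hm)
      (D_mono F (le_max_right _ _) hn)⟩
  | single p r =>
    have : Finsupp.single p r = r • e p.1 p.2 := by simp [e]
    rw [this]
    exact ⟨wt F p.1, Submodule.smul_mem _ _ (e_mem_Sp le_rfl)⟩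

lemma Tb_mul (i b) (v : V) : Tb i b (Tb i (!b) v) = v := by
  obtain ⟨n, hn⟩ := exists_mem_D (pr i) v
  exact (two_strand i n).1 b v hn

lemma Tb_mul' (i b) (v : V) : Tb i (!b) (Tb i b v) = v := by
  rw [← Tb_comm, Tb_mul]

lemma Tb_Z (i b) (v : V) : Tb i b (Z i b v) = L i b (Tb i (!b) v) := by
  obtain ⟨n, hn⟩ := exists_mem_D (pr i) v
  exact (two_strand i n).2 b v hn

/-- The letter in leg `i+1` is obtained from the one in leg `i` by conjugation:
`X_{i+1} = T_i⁻¹ X_i T_i⁻¹` and `Y_{i+1} = T_i Y_i T_i`. -/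
lemma Z_eq (i b) (v : V) : Z i b v = Tb i (!b) (L i b (Tb i (!b) v)) := by
  rw [Tb_L, Tb_mul]

/-! ### Relations on three legs -/

/-- Abstract form of the operators on three consecutive legs: `s b`, `t b` stand for
`T_i^{±1}`, `T_{i+1}^{±1}`, `L b` for the letter in leg `i` and `Z b` for the one in leg `i+1`. -/
structure Sys (R M : Type*) [CommRing R] [AddCommGroup M] [Module R M] where
  h : Bool → R
  s : Bool → M →ₗ[R] M
  t : Bool → M →ₗ[R] M
  L : Bool → M →ₗ[R] M
  Z : Bool → M →ₗ[R] M
  hnot : ∀ b, h (!b) = - h b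
  ss : ∀ b v, s b (s (!b) v) = v
  tt : ∀ b v, t b (t (!b) v) = v
  sadd : ∀ b v, s b v = s (!b) v + h b • v
  tadd : ∀ b v, t b v = t (!b) v + h b • v
  sL : ∀ b v, s (!b) (L b v) = Z b (s b v)
  sZ : ∀ b v, s b (Z b v) = L b (s (!b) v)
  ZL : ∀ b v, Z b (L b v) = L b (Z b v)
  ZL' : ∀ b v, Z b (L (!b) v) = L (!b) (Z b v) + h b • L (!b) (L b (s (!b) v))
  tL : ∀ a b v, t a (L b v) = L b (t a v)

namespace Sys
variable {R M : Type*} [CommRing R] [AddCommGroup M] [Module R M] (S : Sys R M)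

/-- The letter in leg `i+2`. -/
def W (b : Bool) : M →ₗ[R] M := S.t (!b) ∘ₗ S.Z b ∘ₗ S.t (!b)

lemma W_apply (b v) : S.W b v = S.t (!b) (S.Z b (S.t (!b) v)) := rfl

lemma ss' (b v) : S.s (!b) (S.s b v) = v := by simpa using S.ss (!b) v
lemma tt' (b v) : S.t (!b) (S.t b v) = v := by simpa using S.tt (!b) v
lemma tZ (b v) : S.t (!b) (S.Z b v) = S.W b (S.t b v) := by rw [W_apply, S.tt']
lemma tW (b v) : S.t b (S.W b v) = S.Z b (S.t (!b) v) := by rw [W_apply, S.tt]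
lemma sss (b v) : S.s b (S.s b v) = v + S.h b • S.s b v := by
  rw [S.sadd b v, map_add, S.ss, map_smul, ← S.sadd]
lemma ttt (b v) : S.t b (S.t b v) = v + S.h b • S.t b v := by
  rw [S.tadd b v, map_add, S.tt, map_smul, ← S.tadd]

lemma WL (b v) : S.W b (S.L b v) = S.L b (S.W b v) := by
  rw [W_apply, S.tL, S.ZL, S.tL, W_apply]

lemma WL' (b v) : S.W b (S.L (!b) v) = S.L (!b) (S.W b v) +
    S.h b • S.L (!b) (S.L b (S.t (!b) (S.s (!b) (S.t (!b) v)))) := by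
  rw [W_apply, S.tL, S.ZL', map_add, map_smul, S.tL, S.tL, S.tL, W_apply]

/-- The braid relation at the vector `v`. -/
def Br (v : M) : Prop := S.s true (S.t true (S.s true v)) = S.t true (S.s true (S.t true v))

/-- All versions of the braid relation with signs are equivalent at each vector, as a consequence
of the quadratic relations. -/
lemma br_iff (a b c : Bool) (habc : b = a ∨ b = c) (v : M) :
    S.Br v ↔ S.s a (S.t b (S.s c v)) = S.t c (S.s b (S.t a v)) := by
  have s1 : ∀ v, S.s false v = S.s true v - S.h true • v := fun v => by
    rw [S.sadd true v]; simp
  have t1 : ∀ v, S.t false v = S.t true v - S.h true • v := fun v => by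
    rw [S.tadd true v]; simp
  unfold Br
  rw [← sub_eq_zero, ← sub_eq_zero (b := S.t c _)]
  have : S.s true (S.t true (S.s true v)) - S.t true (S.s true (S.t true v)) =
      S.s a (S.t b (S.s c v)) - S.t c (S.s b (S.t a v)) := by
    cases a <;> cases b <;> cases c <;> simp at habc <;>
      simp only [s1, t1, map_sub, map_smul, S.sss, S.ttt] <;> module
  rw [this]

/-- The relations at `v` between the letter in leg `i+2`, the operator `T_i`, and the letter in
leg `i+1`. -/
structure Good (v : M) : Prop where
  br : S.Br v
  sW : ∀ a b, S.s a (S.W b v) = S.W b (S.s a v)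
  WZ : ∀ b, S.W b (S.Z b v) = S.Z b (S.W b v)
  WZ' : ∀ b, S.W b (S.Z (!b) v) = S.Z (!b) (S.W b v) + S.h b • S.Z (!b) (S.Z b (S.t (!b) v))

variable {S}

lemma Good.braid {v : M} (h : S.Good v) (a b c : Bool) (habc : b = a ∨ b = c) :
    S.s a (S.t b (S.s c v)) = S.t c (S.s b (S.t a v)) := (S.br_iff a b c habc v).1 h.br

/-- Commutation of `T_i^{±1}` with the letter in leg `i+2` needs to be known for one sign only. -/
lemma sW_of {v : M} (b c : Bool) (h : S.s c (S.W b v) = S.W b (S.s c v)) (a : Bool) :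
    S.s a (S.W b v) = S.W b (S.s a v) := by
  rcases eq_or_ne a c with rfl | hac
  · exact h
  · obtain rfl : c = !a := by cases a <;> cases c <;> simp_all
    rw [S.sadd a, h, S.sadd a v, map_add, map_smul]

variable {P : Submodule R M}

/-- The relations in `Good` are inherited from a subspace `P` by the image of `P` under the letters
in the three legs; this lemma and those below treat one relation and one leg each. -/
lemma br_L (hP : ∀ v ∈ P, S.Good v) (hs : ∀ b, ∀ v ∈ P, S.s b v ∈ P)
    (ht : ∀ b, ∀ v ∈ P, S.t b v ∈ P) (b) (w : M) (hw : w ∈ P) : S.Br (S.L b w) := by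
  rw [S.br_iff (!b) (!b) (!b) (Or.inl rfl), S.sL, S.tZ, (hP _ (ht b _ (hs b _ hw))).sW, S.tL, S.sL,
    S.tZ, (hP w hw).braid (!b) b b (Or.inr rfl)]

lemma br_Z (hP : ∀ v ∈ P, S.Good v) (ht : ∀ b, ∀ v ∈ P, S.t b v ∈ P) (b) (w : M) (hw : w ∈ P) :
    S.Br (S.Z b w) := by
  rw [S.br_iff (!b) b b (Or.inr rfl), S.sZ, S.tL, S.sL, S.tZ, (hP _ (ht b _ hw)).sW, S.tW,
    (hP w hw).braid b b (!b) (Or.inl rfl)]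

lemma br_W (hP : ∀ v ∈ P, S.Good v) (b) (w : M) (hw : w ∈ P) :
    S.Br (S.W b w) := by
  rw [S.br_iff b b b (Or.inl rfl), (hP w hw).sW, S.tW, S.sZ, S.tW, S.sZ, S.tL,
    (hP w hw).braid (!b) (!b) b (Or.inl rfl)]

lemma sW_L (hP : ∀ v ∈ P, S.Good v) (hs : ∀ b, ∀ v ∈ P, S.s b v ∈ P)
    (a b c) (w : M) (hw : w ∈ P) :
    S.s a (S.W b (S.L c w)) = S.W b (S.s a (S.L c w)) := by
  rcases eq_or_ne c b with rfl | hac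
  · refine sW_of c (!c) ?_ a
    rw [S.WL, S.sL, (hP w hw).sW, S.sL, (hP _ (hs _ _ hw)).WZ]
  · obtain rfl : c = !b := by cases b <;> cases c <;> simp_all
    refine sW_of b b ?_ a
    have e1 := fun v => S.sL (!b) v
    simp only [Bool.not_not] at e1
    rw [S.WL', map_add, map_smul, e1, e1, S.sL, (hP w hw).sW, e1, (hP _ (hs _ _ hw)).WZ',
      ← (hP w hw).braid (!b) (!b) (!b) (Or.inl rfl), S.ss]

lemma sW_Z (hP : ∀ v ∈ P, S.Good v) (hs : ∀ b, ∀ v ∈ P, S.s b v ∈ P)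
    (a b c) (w : M) (hw : w ∈ P) :
    S.s a (S.W b (S.Z c w)) = S.W b (S.s a (S.Z c w)) := by
  rcases eq_or_ne c b with rfl | hac
  · refine sW_of c c ?_ a
    rw [(hP w hw).WZ, S.sZ, (hP w hw).sW, S.sZ, S.WL]
  · obtain rfl : c = !b := by cases b <;> cases c <;> simp_all
    refine sW_of b (!b) ?_ a
    have e1 := fun v => S.sZ (!b) v
    simp only [Bool.not_not] at e1
    rw [(hP w hw).WZ', map_add, map_smul, e1, e1, S.sZ, (hP w hw).sW, e1, S.WL',
      ← (hP _ (hs _ _ hw)).braid (!b) (!b) (!b) (Or.inl rfl), S.ss']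

lemma WZ_L (hP : ∀ v ∈ P, S.Good v) (hs : ∀ b, ∀ v ∈ P, S.s b v ∈ P)
    (ht : ∀ b, ∀ v ∈ P, S.t b v ∈ P) (b c) (w : M) (hw : w ∈ P) :
    S.W b (S.Z b (S.L c w)) = S.Z b (S.W b (S.L c w)) := by
  rcases eq_or_ne c b with rfl | hac
  · rw [S.ZL, S.WL, S.WL, S.ZL, (hP w hw).WZ]
  · obtain rfl : c = !b := by cases b <;> cases c <;> simp_all
    have a1 : S.t (!b) (S.s (!b) (S.t (!b) (S.Z b w))) =
        S.Z b (S.t (!b) (S.s (!b) (S.t b w))) - S.h b • S.W b (S.s (!b) (S.t b w)) := by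
      have := S.tadd b (S.W b (S.s (!b) (S.t b w)))
      rw [S.tW] at this
      rw [S.tZ, (hP _ (ht _ _ hw)).sW, this]
      module
    have a2 : S.t (!b) (S.s (!b) (S.t (!b) (S.L b (S.s (!b) w)))) = S.W b (S.s (!b) (S.t b w)) := by
      rw [S.tL, S.sL, S.tZ, ← (hP _ (hs _ _ hw)).braid (!b) b b (Or.inr rfl), S.ss]
    have a3 : S.s b (S.s b (S.t (!b) (S.s (!b) (S.t (!b) w)))) =
        S.t (!b) (S.s (!b) (S.t b w)) := by
      rw [← (hP w hw).braid (!b) (!b) (!b) (Or.inl rfl), S.ss,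
        (hP w hw).braid b (!b) (!b) (Or.inr rfl)]
    rw [S.sss] at a3
    rw [S.ZL', map_add, map_smul, S.WL', S.WL', S.WL, a1, a2, S.WL', map_add, map_smul, S.ZL',
      S.ZL', S.ZL, S.sL, (hP w hw).WZ, (hP w hw).sW, ← a3]
    simp only [map_add, map_sub, map_smul]
    module

lemma WZ'_L (hP : ∀ v ∈ P, S.Good v) (ht : ∀ b, ∀ v ∈ P, S.t b v ∈ P)
    (hs : ∀ b, ∀ v ∈ P, S.s b v ∈ P) (b c) (w : M) (hw : w ∈ P) :
    S.W b (S.Z (!b) (S.L c w)) =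
      S.Z (!b) (S.W b (S.L c w)) + S.h b • S.Z (!b) (S.Z b (S.t (!b) (S.L c w))) := by
  have f := fun v => S.ZL' (!b) v
  simp only [Bool.not_not, S.hnot] at f
  rcases eq_or_ne c b with rfl | hac
  · rw [f, map_add, map_smul, S.WL, S.WL, S.WL', (hP w hw).WZ', S.WL, f, S.tL, S.ZL, f, S.sZ,
      ← (hP _ (hs _ _ hw)).braid (!c) (!c) (!c) (Or.inl rfl), S.ss', (hP w hw).sW]
    simp only [map_add, map_smul]
    module
  · obtain rfl : c = !b := by cases b <;> cases c <;> simp_all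
    have a1 : S.t (!b) (S.s (!b) (S.t (!b) (S.Z (!b) w))) =
        S.Z (!b) (S.t b (S.s (!b) (S.t (!b) w))) - S.h b • S.L (!b) (S.t (!b) (S.s b w)) := by
      have e1 := S.tadd b (S.Z (!b) w)
      have e2 := S.tZ (!b) w
      have e3 := S.sZ (!b) w
      have e4 := S.tW (!b) (S.s (!b) (S.t (!b) w))
      simp only [Bool.not_not] at e2 e3 e4
      rw [← sub_eq_iff_eq_add] at e1
      rw [← e1, map_sub, map_sub, e2, (hP _ (ht _ _ hw)).sW, e4, map_smul, map_smul, e3, S.tL]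
    have a2 : S.s b (S.t (!b) (S.s (!b) (S.t (!b) w))) = S.t (!b) (S.s (!b) w) := by
      rw [← (hP w hw).braid (!b) (!b) (!b) (Or.inl rfl), S.ss]
    rw [S.ZL, S.WL', (hP w hw).WZ', a1, S.WL']
    simp only [map_add, map_sub, map_smul, S.ZL, S.tL, S.ZL', f, S.ss, a2]
    rw [S.tadd b (S.s (!b) (S.t (!b) w)), S.sadd b w]
    simp only [map_add, map_smul]
    module

end Sys

/-! ### Locality and the braid relation -/

/-- The span of the basis vectors whose legs `i`, `i+1` are empty. -/
abbrev NN (i : ℕ) : Submodule Kfield V := Sp fun c => c i = [] ∧ c (i + 1) = []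

lemma NN_le (i) : NN i ≤ N i := Sp_mono fun _ hc => hc.1

lemma T_NN (i) : ∀ v ∈ NN i, T i v = tau i v :=
  Sp_eqOn fun c w hc => T_nil i c w hc.1 hc.2

lemma Tb_of_T {i : ℕ} {S : Module.End Kfield V} {v : V} (h : S (T i v) = T i (S v)) (b) :
    S (Tb i b v) = Tb i b (S v) := by
  cases b <;> simp [U, h]

lemma T_of_Tb {i : ℕ} {S : Module.End Kfield V} {v : V} (b) (h : S (Tb i b v) = Tb i b (S v)) :
    S (T i v) = T i (S v) := by
  cases b
  · simpa [U] using h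
  · simpa [U] using h

/-- An operator which commutes with the letters in the legs `i`, `i+1` and with the Hecke algebra
operator `tau i` commutes with `T_i` and the letters `X_{i+1}`, `Y_{i+1}`. -/
lemma commute_gen (i : ℕ) (S : Module.End Kfield V) (hL : ∀ b v, S (L i b v) = L i b (S v))
    (hL' : ∀ b v, S (L (i + 1) b v) = L (i + 1) b (S v)) (hN : ∀ v ∈ N i, S v ∈ N i)
    (hNN : ∀ v ∈ NN i, S v ∈ NN i) (ht : ∀ v ∈ NN i, S (tau i v) = tau i (S v)) :
    (∀ v, S (T i v) = T i (S v)) ∧ ∀ b v, S (Z i b v) = Z i b (S v) := by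
  have hi : i ∈ pr i := by simp
  have hi' : i + 1 ∈ pr i := by simp
  have h0 : ∀ v ∈ NN i, S (T i v) = T i (S v) := fun v hv => by
    rw [T_NN i v hv, ht v hv, T_NN i _ (hNN v hv)]
  have hZ : ∀ b, ∀ v ∈ N i, S (Z i b v) = Z i b (S v) := fun b v hv => by
    rw [Z_N i b v hv, hL', Z_N i b _ (hN v hv)]
  have main : ∀ n, (∀ v ∈ D (pr i) n, S (T i v) = T i (S v)) ∧
      ∀ b, ∀ v ∈ D (pr i) n, S (Z i b v) = Z i b (S v) := by
    intro n
    induction n with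
    | zero =>
      have hle : D (pr i) 0 ≤ NN i := Sp_mono fun c hc => by
        rw [wt_pr] at hc
        exact ⟨List.length_eq_zero_iff.1 (by omega), List.length_eq_zero_iff.1 (by omega)⟩
      exact ⟨fun v hv => h0 v (hle hv), fun b v hv => hZ b v (NN_le i (hle hv))⟩
    | succ n ih =>
      refine ⟨Sp_eqOn (f := S * T i) (g := T i * S) fun c w hc => ?_,
        fun b => Sp_eqOn (f := S * Z i b) (g := Z i b * S) fun c w hc => ?_⟩
      all_goals simp only [Module.End.mul_apply]
      · rcases cfg_cases i c with hc0 | ⟨b, c, rfl⟩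
        · rcases cfg_cases (i + 1) c with h1 | ⟨b, c, rfl⟩
          · exact h0 _ (e_mem_Sp ⟨hc0, h1⟩)
          · rw [push_ne _ _ (by omega)] at hc0
            rw [wt_push hi'] at hc
            have hm : e c w ∈ D (pr i) n := e_mem_Sp (by omega)
            have hmN : e c w ∈ N i := e_mem_Sp hc0
            rw [← L_e]
            refine T_of_Tb b ?_
            rw [Tb_L' i b _ hmN, hL, hL', Tb_L' i b _ (hN _ hmN), Tb_of_T (ih.1 _ hm)]
        · rw [wt_push hi] at hc
          have hm : e c w ∈ D (pr i) n := e_mem_Sp (by omega)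
          rw [← L_e]
          refine T_of_Tb (!b) ?_
          rw [Tb_L, hL, Tb_L, ih.2 b _ (Tb_mem_D hi hi' b n _ hm), Tb_of_T (ih.1 _ hm)]
      · rcases cfg_cases i c with hc0 | ⟨a, c, rfl⟩
        · exact hZ b _ (e_mem_Sp hc0)
        · rw [wt_push hi] at hc
          have hm : e c w ∈ D (pr i) n := e_mem_Sp (by omega)
          rw [← L_e]
          rcases eq_or_ne a b with rfl | hab
          · rw [Z_L_self, hL, hL, Z_L_self, ih.2 a _ hm]
          · obtain rfl : a = !b := by cases a <;> cases b <;> simp_all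
            rw [Z_L_not, map_add, map_smul, hL, hL, hL, hL, Z_L_not, ih.2 b _ hm,
              Tb_of_T (ih.1 _ hm)]
  refine ⟨fun v => ?_, fun b v => ?_⟩ <;> obtain ⟨n, hn⟩ := exists_mem_D (pr i) v
  · exact (main n).1 v hn
  · exact (main n).2 b v hn

lemma tau_e (i c w) : tau i (e c w) = if w⁻¹ i < w⁻¹ (i + 1) then e c (swapAdj i * w)
    else e c (swapAdj i * w) + hvar • e c w := by simp [tau]

lemma tau_L (i j a) (v : V) : tau i (L j a v) = L j a (tau i v) := by
  refine eq_of_e (f := tau i * L j a) (g := L j a * tau i) (fun c w => ?_) v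
  simp only [Module.End.mul_apply, L_e, tau, lin_e]
  split_ifs <;> simp

lemma L_mem_Sp {P : Cfg → Prop} (j a) (h : ∀ c, P c → P (push j a c)) :
    ∀ v ∈ Sp P, L j a v ∈ Sp P :=
  Sp_map fun c w hc => by rw [L_e]; exact e_mem_Sp (h c hc)

/-- `T_i` and the letters in leg `i+1` commute with the letters in the other legs. -/
lemma commute_L {i j : ℕ} (h : j ≠ i) (h' : j ≠ i + 1) (a) :
    (∀ v, L j a (T i v) = T i (L j a v)) ∧ ∀ b v, L j a (Z i b v) = Z i b (L j a v) := by
  refine commute_gen i (L j a) (fun b v => L_comm h _ _ v) (fun b v => L_comm h' _ _ v)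
    (L_mem_Sp _ _ fun c hc => ?_) (L_mem_Sp _ _ fun c hc => ?_) (fun v _ => (tau_L _ _ _ v).symm)
  · rwa [push_ne _ _ h.symm]
  · rwa [push_ne _ _ h.symm, push_ne _ _ h'.symm]

lemma Tb_L_comm {i j : ℕ} (h : j ≠ i) (h' : j ≠ i + 1) (b a v) :
    Tb i b (L j a v) = L j a (Tb i b v) :=
  (Tb_of_T ((commute_L h h' a).1 v) b).symm

open Classical in
/-- `T_i` and the letters in leg `i+1` preserve conditions on the other legs. -/
lemma mem_Sp_of {i : ℕ} {P : Cfg → Prop} (h : ∀ b c, P (push i b c) ↔ P c)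
    (h' : ∀ b c, P (push (i + 1) b c) ↔ P c) :
    (∀ v ∈ Sp P, T i v ∈ Sp P) ∧ ∀ b, ∀ v ∈ Sp P, Z i b v ∈ Sp P := by
  -- Membership in `Sp P` is detected by the projection onto it, which commutes with `T_i`.
  let S : Module.End Kfield V := lin fun c w => if P c then e c w else 0
  have hS : ∀ c w, S (e c w) = if P c then e c w else 0 := fun c w => lin_e _ c w
  have hS1 : ∀ v ∈ Sp P, S v = v :=
    Sp_eqOn (g := LinearMap.id) fun c w hc => by simp [hS, hc]
  have hS2 : ∀ v, S v ∈ Sp P := fun v => Sp_map (P := fun _ => True) (fun c w _ => by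
    rw [hS]
    split_ifs with hc
    · exact e_mem_Sp hc
    · exact Submodule.zero_mem _) v (mem_Sp_true v)
  have hSQ : ∀ Q, ∀ v ∈ Sp Q, S v ∈ Sp Q := fun Q => Sp_map fun c w hc => by
    rw [hS]
    split_ifs
    · exact e_mem_Sp hc
    · exact Submodule.zero_mem _
  have key := commute_gen i S
    (fun b v => by
      refine eq_of_e (f := S * L i b) (g := L i b * S) (fun c w => ?_) v
      simp only [Module.End.mul_apply, L_e, hS, h]
      split_ifs <;> simp)
    (fun b v => by
      refine eq_of_e (f := S * L (i + 1) b) (g := L (i + 1) b * S) (fun c w => ?_) v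
      simp only [Module.End.mul_apply, L_e, hS, h']
      split_ifs <;> simp)
    (hSQ _) (hSQ _)
    (fun v _ => by
      refine eq_of_e (f := S * tau i) (g := tau i * S) (fun c w => ?_) v
      simp only [Module.End.mul_apply]
      by_cases hc : P c
      · rw [hS, if_pos hc, tau_e]
        split_ifs <;> simp only [map_add, map_smul, hS, if_pos hc]
      · rw [hS, if_neg hc, tau_e]
        split_ifs <;> simp only [map_add, map_smul, hS, if_neg hc, map_zero, smul_zero, add_zero])
  refine ⟨fun v hv => ?_, fun b v hv => ?_⟩
  · rw [← hS1 v hv, ← key.1]; exact hS2 _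
  · rw [← hS1 v hv, ← key.2]; exact hS2 _

lemma T_mem_N {i j : ℕ} (h : j ≠ i) (h' : j ≠ i + 1) : ∀ v ∈ N j, T i v ∈ N j :=
  (mem_Sp_of (fun b c => by rw [push_ne _ _ h]) (fun b c => by rw [push_ne _ _ h'])).1

lemma Tb_mem_N {i j : ℕ} (h : j ≠ i) (h' : j ≠ i + 1) (b) : ∀ v ∈ N j, Tb i b v ∈ N j :=
  fun v hv => U_mem b (T_mem_N h h' v hv) hv

lemma Z_mem_N {i j : ℕ} (h : j ≠ i) (h' : j ≠ i + 1) (b) : ∀ v ∈ N j, Z i b v ∈ N j :=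
  (mem_Sp_of (fun b c => by rw [push_ne _ _ h]) (fun b c => by rw [push_ne _ _ h'])).2 b

lemma tau_comm {i j : ℕ} (h : i + 1 < j) (v : V) : tau i (tau j v) = tau j (tau i v) := by
  refine eq_of_e (f := tau i * tau j) (g := tau j * tau i) (fun c w => ?_) v
  simp only [Module.End.mul_apply]
  have h1 : swapAdj i j = j := swapAdj_of_ne (by omega) (by omega)
  have h2 : swapAdj i (j + 1) = j + 1 := swapAdj_of_ne (by omega) (by omega)
  have h3 : swapAdj j i = i := swapAdj_of_ne (by omega) (by omega)
  have h4 : swapAdj j (i + 1) = i + 1 := swapAdj_of_ne (by omega) (by omega)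
  have hc : swapAdj i * (swapAdj j * w) = swapAdj j * (swapAdj i * w) := by
    rw [← mul_assoc, swapAdj_comm h, mul_assoc]
  rw [tau_e j, tau_e i]
  split_ifs
  all_goals
    simp only [map_add, map_smul, tau_e, inv_swapAdj_mul, *]
    simp only [if_true, if_false, smul_add]
    try abel

lemma tau_braid (i : ℕ) (v : V) :
    tau i (tau (i + 1) (tau i v)) = tau (i + 1) (tau i (tau (i + 1) v)) := by
  refine eq_of_e (f := tau i * tau (i + 1) * tau i) (g := tau (i + 1) * tau i * tau (i + 1))
    (fun c w => ?_) v
  simp only [Module.End.mul_apply]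
  have h1 : swapAdj i i = i + 1 := swapAdj_left _
  have h2 : swapAdj i (i + 1) = i := swapAdj_right _
  have h3 : swapAdj i (i + 1 + 1) = i + 1 + 1 := swapAdj_of_ne (by omega) (by omega)
  have h4 : swapAdj (i + 1) i = i := swapAdj_of_ne (by omega) (by omega)
  have h5 : swapAdj (i + 1) (i + 1) = i + 1 + 1 := swapAdj_left _
  have h6 : swapAdj (i + 1) (i + 1 + 1) = i + 1 := swapAdj_right _
  have d1 : w⁻¹ i ≠ w⁻¹ (i + 1) := inv_ne w (by omega)
  have d2 : w⁻¹ i ≠ w⁻¹ (i + 1 + 1) := inv_ne w (by omega)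
  have d3 : w⁻¹ (i + 1) ≠ w⁻¹ (i + 1 + 1) := inv_ne w (by omega)
  have hc : swapAdj i * (swapAdj (i + 1) * (swapAdj i * w)) =
      swapAdj (i + 1) * (swapAdj i * (swapAdj (i + 1) * w)) := by
    have := swapAdj_braid i
    simp only [← mul_assoc]
    rw [this]
  have g1 := swapAdj_mul_cancel i w
  have g2 := swapAdj_mul_cancel (i + 1) w
  rcases lt_or_gt_of_ne d1 with e1 | e1 <;> rcases lt_or_gt_of_ne d2 with e2 | e2 <;>
    rcases lt_or_gt_of_ne d3 with e3 | e3 <;> first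
    | omega
    | (simp only [map_add, map_smul, tau_e, inv_swapAdj_mul, h1, h2, h3, h4, h5, h6, e1, e2, e3,
        not_lt_of_gt e1, not_lt_of_gt e2, not_lt_of_gt e3, if_true, if_false, hc, g1, g2,
        smul_add]
       try abel)

/-- Distant operators `T_i`, `T_j` commute. -/
lemma T_comm {i j : ℕ} (h : i + 1 < j) (v : V) : T i (T j v) = T j (T i v) := by
  have h1 : ∀ v, tau i (T j v) = T j (tau i v) :=
    (commute_gen j (tau i) (fun b v => tau_L _ _ _ v) (fun b v => tau_L _ _ _ v)
      (tau_mem_Sp _ _) (tau_mem_Sp _ _) (fun v _ => tau_comm h v)).1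
  refine ((commute_gen i (T j) (fun b v => ?_) (fun b v => ?_) (T_mem_N (by omega) (by omega))
    (mem_Sp_of (fun b c => ?_) (fun b c => ?_)).1 (fun v _ => (h1 v).symm)).1 v).symm
  · exact ((commute_L (by omega) (by omega) b).1 v).symm
  · exact ((commute_L (by omega) (by omega) b).1 v).symm
  · rw [push_ne _ _ (by omega), push_ne _ _ (by omega)]
  · rw [push_ne _ _ (by omega), push_ne _ _ (by omega)]

/-- The operators on the legs `i`, `i+1`, `i+2` of the module `V`. -/
def sys (i : ℕ) : Sys Kfield V where
  h := hb
  s := Tb i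
  t := Tb (i + 1)
  L := L i
  Z := Z i
  hnot := hb_not
  ss := Tb_mul i
  tt := Tb_mul (i + 1)
  sadd := Tb_add i
  tadd := Tb_add (i + 1)
  sL := Tb_L i
  sZ := Tb_Z i
  ZL := Z_L_self i
  ZL' := Z_L_not i
  tL a b v := Tb_L_comm (by omega) (by omega) a b v

lemma W_N (i b) : ∀ v ∈ N i, (sys i).W b v = Z (i + 1) b v := by
  intro v hv
  rw [Sys.W_apply]
  change Tb (i + 1) (!b) (Z i b (Tb (i + 1) (!b) v)) = _
  rw [Z_N i b _ (Tb_mem_N (by omega) (by omega) _ v hv), Z_eq]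

/-- The vectors at which the relations on three legs hold form a subspace. -/
def goodSub (i : ℕ) : Submodule Kfield V where
  carrier := {v | (sys i).Good v}
  zero_mem' := ⟨by simp [Sys.Br], by simp, by simp, by simp⟩
  add_mem' := by
    rintro v w hv hw
    refine ⟨?_, fun a b => ?_, fun b => ?_, fun b => ?_⟩
    · have h1 := hv.br
      have h2 := hw.br
      unfold Sys.Br at *
      simp only [map_add, h1, h2]
    · simp only [map_add, hv.sW, hw.sW]
    · simp only [map_add, hv.WZ, hw.WZ]
    · simp only [map_add, hv.WZ', hw.WZ', smul_add]
      abel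
  smul_mem' := by
    rintro r v hv
    refine ⟨?_, fun a b => ?_, fun b => ?_, fun b => ?_⟩
    · have h1 := hv.br
      unfold Sys.Br at *
      simp only [map_smul, h1]
    · simp only [map_smul, hv.sW]
    · simp only [map_smul, hv.WZ]
    · simp only [map_smul, hv.WZ', smul_add, smul_comm r]

/-- The commutation relations between the letters in the legs `i+1` and `i+2` are known when leg `i`
is empty. -/
lemma good_of_N {i : ℕ} {v : V} (hv : v ∈ N i) (hbr : (sys i).Br v)
    (hw : ∀ a b, (sys i).s a ((sys i).W b v) = (sys i).W b ((sys i).s a v)) : (sys i).Good v := by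
  have hL : ∀ a, ∀ v ∈ N i, L (i + 1) a v ∈ N i := fun a =>
    L_mem_Sp _ _ fun c hc => by rwa [push_ne _ _ (by omega)]
  have hZ := fun b => Z_mem_N (i := i + 1) (j := i) (by omega) (by omega) b v hv
  refine ⟨hbr, hw, fun b => ?_, fun b => ?_⟩
  · change (sys i).W b (Z i b v) = Z i b ((sys i).W b v)
    rw [Z_N i b v hv, W_N i b _ (hL _ v hv), W_N i b v hv, Z_N i b _ (hZ b), Z_L_self]
  · change (sys i).W b (Z i (!b) v) = Z i (!b) ((sys i).W b v) +
      hb b • Z i (!b) (Z i b (Tb (i + 1) (!b) v))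
    have ht := Tb_mem_N (i := i + 1) (j := i) (by omega) (by omega) (!b) v hv
    rw [Z_N i (!b) v hv, W_N i b _ (hL _ v hv), W_N i b v hv, Z_N i (!b) _ (hZ b), Z_L_not,
      Z_N i b _ ht, Z_N i (!b) _ (hL _ _ ht)]

lemma Tb_mem_NN (i b) : ∀ v ∈ NN i, Tb i b v ∈ NN i := fun v hv =>
  U_mem b (by rw [T_NN i v hv]; exact tau_mem_Sp _ _ v hv) hv

lemma NN_le' (i) : NN i ≤ N (i + 1) := Sp_mono fun _ hc => hc.2

lemma W_NN (i b) : ∀ v ∈ NN i, (sys i).W b v = L (i + 2) b v := fun v hv => by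
  rw [W_N i b v (NN_le i hv), Z_N (i + 1) b v (NN_le' i hv)]

lemma sW_NN (i a b) : ∀ v ∈ NN i,
    (sys i).s a ((sys i).W b v) = (sys i).W b ((sys i).s a v) := fun v hv => by
  rw [W_NN i b v hv]
  change Tb i a _ = (sys i).W b (Tb i a v)
  rw [W_NN i b _ (Tb_mem_NN i a v hv), Tb_L_comm (by omega) (by omega)]

/-- The relations on three legs, by induction on the number of letters they contain. -/
lemma good_D (i : ℕ) : ∀ n, ∀ v ∈ D {i, i + 1, i + 2} n, (sys i).Good v := by
  have h0 : i ∈ ({i, i + 1, i + 2} : Finset ℕ) := by simp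
  have h1 : i + 1 ∈ ({i, i + 1, i + 2} : Finset ℕ) := by simp
  have h2 : i + 1 + 1 ∈ ({i, i + 1, i + 2} : Finset ℕ) := by simp
  have hs : ∀ n b, ∀ v ∈ D {i, i + 1, i + 2} n, (sys i).s b v ∈ D {i, i + 1, i + 2} n :=
    fun n b => Tb_mem_D h0 h1 b n
  have ht : ∀ n b, ∀ v ∈ D {i, i + 1, i + 2} n, (sys i).t b v ∈ D {i, i + 1, i + 2} n :=
    fun n b => Tb_mem_D h1 h2 b n
  -- With three empty legs, only the Hecke algebra acts.
  have base : ∀ c w, c i = [] → c (i + 1) = [] → c (i + 2) = [] → (sys i).Good (e c w) := by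
    intro c w c0 c1 c2
    have hN : e c w ∈ NN i := e_mem_Sp ⟨c0, c1⟩
    refine good_of_N (NN_le i hN) ?_ fun a b => sW_NN i a b _ hN
    let Q : Submodule Kfield V := Sp fun c => c i = [] ∧ c (i + 1) = [] ∧ c (i + 2) = []
    have q1 : ∀ v ∈ Q, T i v = tau i v := fun v hv =>
      T_NN i v (Sp_mono (fun c hc => ⟨hc.1, hc.2.1⟩) hv)
    have q2 : ∀ v ∈ Q, T (i + 1) v = tau (i + 1) v := fun v hv =>
      T_NN (i + 1) v (Sp_mono (fun c hc => ⟨hc.2.1, hc.2.2⟩) hv)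
    have q3 : ∀ j, ∀ v ∈ Q, tau j v ∈ Q := fun j => tau_mem_Sp _ j
    have hq : e c w ∈ Q := e_mem_Sp ⟨c0, c1, c2⟩
    generalize e c w = v at hq
    change T i (T (i + 1) (T i v)) = T (i + 1) (T i (T (i + 1) v))
    rw [q1 v hq, q2 v hq, q2 _ (q3 _ _ hq), q1 _ (q3 _ _ hq), q1 _ (q3 _ _ (q3 _ _ hq)),
      q2 _ (q3 _ _ (q3 _ _ hq)), tau_braid]
  intro n
  induction n with
  | zero =>
    have hle : D {i, i + 1, i + 2} 0 ≤ goodSub i := Submodule.span_le.2 (by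
      rintro v ⟨c, w, hc, rfl⟩
      have hc : ∑ j ∈ {i, i + 1, i + 2}, (c j).length = 0 := Nat.le_zero.1 hc
      rw [Finset.sum_eq_zero_iff] at hc
      exact base c w (List.length_eq_zero_iff.1 (hc _ h0)) (List.length_eq_zero_iff.1 (hc _ h1))
        (List.length_eq_zero_iff.1 (hc _ h2)))
    exact fun v hv => hle hv
  | succ n ih =>
    have hle : D {i, i + 1, i + 2} (n + 1) ≤ goodSub i := Submodule.span_le.2 (by
      rintro v ⟨c, w, hc, rfl⟩
      change (sys i).Good (e c w)
      rcases cfg_cases i c with c0 | ⟨a, c, rfl⟩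
      · rcases cfg_cases (i + 1) c with c1 | ⟨a, c, rfl⟩
        · rcases cfg_cases (i + 2) c with c2 | ⟨a, c, rfl⟩
          · exact base c w c0 c1 c2
          · rw [wt_push h2] at hc
            have hm : e c w ∈ D {i, i + 1, i + 2} n := e_mem_Sp (by omega)
            have hN : e (push (i + 2) a c) w ∈ NN i := e_mem_Sp ⟨c0, c1⟩
            rw [push_ne _ _ (by omega)] at c0 c1
            have hN' : e c w ∈ NN i := e_mem_Sp ⟨c0, c1⟩
            refine good_of_N (NN_le i hN) ?_ fun a b => sW_NN i a b _ hN
            rw [← L_e, ← W_NN i a _ hN']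
            exact Sys.br_W ih a _ hm
        · rw [wt_push h1] at hc
          have hm : e c w ∈ D {i, i + 1, i + 2} n := e_mem_Sp (by omega)
          have hN : e (push (i + 1) a c) w ∈ N i := e_mem_Sp c0
          rw [push_ne _ _ (by omega)] at c0
          have hN' : e c w ∈ N i := e_mem_Sp c0
          have hz : e (push (i + 1) a c) w = (sys i).Z a (e c w) := by
            rw [← L_e, ← Z_N i a _ hN']; rfl
          refine good_of_N hN ?_ fun a b => ?_
          · rw [hz]; exact Sys.br_Z ih (ht n) a _ hm
          · rw [hz]; exact Sys.sW_Z ih (hs n) _ _ _ _ hm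
      · rw [wt_push h0] at hc
        have hm : e c w ∈ D {i, i + 1, i + 2} n := e_mem_Sp (by omega)
        have hz : e (push i a c) w = (sys i).L a (e c w) := by rw [← L_e]; rfl
        rw [hz]
        exact ⟨Sys.br_L ih (hs n) (ht n) a _ hm, fun _ _ => Sys.sW_L ih (hs n) _ _ _ _ hm,
          fun _ => Sys.WZ_L ih (hs n) (ht n) _ _ _ hm,
          fun _ => Sys.WZ'_L ih (ht n) (hs n) _ _ _ hm⟩)
    exact fun v hv => hle hv

/-- The relations on three legs hold on the whole module. -/
lemma good (i : ℕ) (v : V) : (sys i).Good v := by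
  obtain ⟨n, hn⟩ := exists_mem_D {i, i + 1, i + 2} v
  exact good_D i n v hn

lemma T_braid (i : ℕ) (v : V) :
    T i (T (i + 1) (T i v)) = T (i + 1) (T i (T (i + 1) v)) := (good i v).br

/-! ### The representation and linear independence -/

/-- The operators by which the generators `X_i` (`b = true`) and `Y_i` (`b = false`) act. -/
def A : ℕ → Bool → Module.End Kfield V
  | 0, b => L 0 b
  | i + 1, b => Tb i (!b) * A i b * Tb i (!b)

lemma A_zero (b) (v : V) : A 0 b v = L 0 b v := rfl
lemma A_succ (i b) (v : V) : A (i + 1) b v = Tb i (!b) (A i b (Tb i (!b) v)) := rfl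

lemma T_Tb_comm {i j : ℕ} (h : i + 1 < j ∨ j + 1 < i) (b) (v : V) :
    T i (Tb j b v) = Tb j b (T i v) := by
  refine Tb_of_T ?_ b
  rcases h with h | h
  · exact T_comm h v
  · exact (T_comm h v).symm

lemma T_A_lt {i : ℕ} (b) : ∀ {j : ℕ}, j < i → ∀ v, T i (A j b v) = A j b (T i v) := by
  intro j
  induction j with
  | zero => exact fun h v => ((commute_L (by omega) (by omega) b).1 v).symm
  | succ j ih =>
    intro h v
    rw [A_succ, T_Tb_comm (by omega), ih (by omega), T_Tb_comm (by omega), A_succ]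

lemma T_A_gt {i : ℕ} (b) : ∀ k v, T i (A (i + 2 + k) b v) = A (i + 2 + k) b (T i v) := by
  intro k
  induction k with
  | zero =>
    intro v
    have br := fun v => (good i v).braid true (!b) (!b) (Or.inr rfl)
    have br' := fun v => (good i v).braid (!b) (!b) true (Or.inl rfl)
    have h1 : ∀ v, T i (Tb (i + 1) (!b) (Tb i (!b) v)) =
      Tb (i + 1) (!b) (Tb i (!b) (T (i + 1) v)) := br
    have h2 : ∀ v, Tb i (!b) (Tb (i + 1) (!b) (T i v)) =
      T (i + 1) (Tb i (!b) (Tb (i + 1) (!b) v)) := br'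
    simp only [add_zero]
    rw [A_succ, A_succ, h1, T_A_lt b (by omega), ← h2, A_succ, A_succ]
  | succ k ih =>
    intro v
    rw [← add_assoc, A_succ, T_Tb_comm (by omega), ih, T_Tb_comm (by omega), A_succ]

lemma T_A {i j : ℕ} (h : j ≠ i) (h' : j ≠ i + 1) (b) (v : V) : T i (A j b v) = A j b (T i v) := by
  rcases lt_or_ge j i with hj | hj
  · exact T_A_lt b hj v
  · obtain ⟨k, rfl⟩ : ∃ k, j = i + 2 + k := ⟨j - (i + 2), by omega⟩
    exact T_A_gt b k v

lemma Tb_A {i j : ℕ} (h : j ≠ i) (h' : j ≠ i + 1) (a b) (v : V) :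
    Tb i a (A j b v) = A j b (Tb i a v) :=
  (Tb_of_T (T_A h h' b v).symm a).symm

lemma A_comm_lt (b) : ∀ i j, i < j → ∀ v, A i b (A j b v) = A j b (A i b v) := by
  intro i
  induction i with
  | zero =>
    intro j hj
    induction j, hj using Nat.le_induction with
    | base => intro v; rw [A_succ, A_succ]; simp only [A_zero]; rw [← Z_eq, ← Z_eq, Z_L_self]
    | succ j hj ih =>
      intro v
      rw [A_succ, ← Tb_A (by omega) (by omega), ih, ← Tb_A (by omega) (by omega), A_succ]
  | succ i ih =>
    intro j hj v
    rw [A_succ, Tb_A (j := j) (by omega) (by omega), ih j (by omega),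
      Tb_A (j := j) (by omega) (by omega), A_succ]

lemma A_comm (b i j) (v : V) : A i b (A j b v) = A j b (A i b v) := by
  rcases lt_trichotomy i j with h | rfl | h
  · exact A_comm_lt b i j h v
  · rfl
  · exact (A_comm_lt b j i h v).symm

lemma A_cross (v : V) : A 0 false (T 0 (A 0 true v)) = A 1 true (A 0 false (T 0 v)) := by
  have h1 := Tb_L_self 0 true v
  have h2 := Z_L_not 0 true (T 0 v)
  have h3 : Tb 0 false (T 0 v) = v := Tb_mul' 0 true v
  rw [A_succ]
  simp only [A_zero]
  rw [← Z_eq]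
  simp only [Bool.not_true] at h2
  rw [h2, h3]
  have h1 : T 0 (L 0 true v) = Z 0 true (T 0 v) + hb true • L 0 true v := h1
  rw [h1, map_add, map_smul]

/-- The action of the generators on `V`. -/
def actGen : HGen → Module.End Kfield V
  | .T i => T i
  | .T' i => Tb i false
  | .X i => A i true
  | .Y i => A i false

lemma act_rel ⦃x y : FreeAlgebra Kfield HGen⦄ (h : HRel x y) :
    FreeAlgebra.lift Kfield actGen x = FreeAlgebra.lift Kfield actGen y := by
  refine LinearMap.ext fun v => ?_
  induction h <;> simp only [map_mul, map_sub, map_one, FreeAlgebra.lift_ι_apply, actGen,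
    AlgHom.commutes, Module.End.mul_apply, Module.End.one_apply, LinearMap.sub_apply,
    Module.algebraMap_end_apply]
  case TT' i => exact Tb_mul i true v
  case T'T i => exact Tb_mul i false v
  case TminusT' i => simp [U]
  case Tcomm i j hij => exact T_Tb_comm hij true v
  case braid i => exact T_braid i v
  case TXT i => exact (A_succ i true v).symm
  case TX i j h1 h2 => exact T_A h1 h2 true v
  case XX i j => exact A_comm true i j v
  case TYT i => exact (A_succ i false v).symm
  case TY i j h1 h2 => exact T_A h1 h2 false v
  case YY i j => exact A_comm false i j v
  case cross => exact A_cross v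

/-- The representation of `H⁺` on `V`. -/
def act : Hplus →ₐ[Kfield] Module.End Kfield V :=
  RingQuot.liftAlgHom Kfield ⟨FreeAlgebra.lift Kfield actGen, act_rel⟩

lemma act_gen (g) : act (gen g) = actGen g := by
  rw [act, gen, RingQuot.liftAlgHom_mkAlgHom_apply, FreeAlgebra.lift_ι_apply]

lemma act_letter (i b) : act (letterElem i b) = A i b := by
  cases b <;> simp [letterElem, act_gen, actGen]

lemma A_empty (k b) : ∀ v ∈ Sp (fun c => ∀ j < k, c j = []), A k b v = L k b v := by
  induction k with
  | zero => exact fun v _ => rfl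
  | succ k ih =>
    intro v hv
    have h1 : v ∈ Sp (fun c => ∀ j < k, c j = []) := Sp_mono (fun c hc j hj => hc j (by omega)) hv
    have hN : v ∈ N k := Sp_mono (fun c hc => hc k (by omega)) hv
    have hst := (mem_Sp_of (i := k) (P := fun c => ∀ j < k, c j = [])
      (fun b c => forall₂_congr fun j hj => by rw [push_ne _ _ (by omega)])
      (fun b c => forall₂_congr fun j hj => by rw [push_ne _ _ (by omega)])).1 v h1
    rw [A_succ, ih _ (U_mem _ hst h1), ← Z_eq, Z_N k b v hN]

/-- The configuration of empty words. -/
def emp : Cfg := fun _ => []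

lemma act_Tword {l : List ℕ} (h : Red l) : act (Tword l) (e emp 1) = e emp (wordPerm l) := by
  induction l with
  | nil => simp [Tword, wordPerm]
  | cons i l ih =>
    have : Tword (i :: l) = gen (HGen.T i) * Tword l := by simp [Tword]
    rw [this, map_mul, Module.End.mul_apply, ih h.tail, act_gen, wordPerm_cons]
    change T i _ = _
    rw [T_nil i emp _ rfl rfl, tau_e, if_pos h.ascent]

lemma act_word (k : ℕ) (c : Cfg) (w) (hc : ∀ j < k, c j = []) (u : List Bool) :
    act (wordElem k u) (e c w) = e (Function.update c k (u ++ c k)) w := by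
  induction u with
  | nil => simp [wordElem]
  | cons b u ih =>
    have : wordElem k (b :: u) = letterElem k b * wordElem k u := by simp [wordElem]
    rw [this, map_mul, Module.End.mul_apply, ih, act_letter, A_empty, L_e]
    · simp [push]
    · refine e_mem_Sp fun j hj => ?_
      rw [Function.update_of_ne (by omega), hc j hj]

lemma act_uProd (u : ℕ →₀ List Bool) (k : ℕ) : ∀ c w, (∀ j < k, c j = []) →
    act (uProd u k) (e c w) = e (fun j => if j < k then u j else c j) w := by
  induction k with
  | zero => intro c w _; simp [uProd]
  | succ k ih =>
    intro c w hc
    have : uProd u (k + 1) = uProd u k * wordElem k (u k) := by simp [uProd, List.range_succ]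
    rw [this, map_mul, Module.End.mul_apply, act_word k c w (fun j hj => hc j (by omega)), ih]
    · congr 1
      funext j
      rcases lt_trichotomy j k with h | rfl | h
      · rw [if_pos h, if_pos (by omega)]
      · simp [hc j (by omega)]
      · rw [if_neg (by omega), if_neg (by omega), Function.update_of_ne (by omega)]
    · intro j hj
      rw [Function.update_of_ne (by omega), hc j (by omega)]

lemma eq_nil_of_lt {u : ℕ →₀ List Bool} {j : ℕ} (h : u.support.sup id < j) : u j = [] := by
  by_contra hne
  have : j ∈ u.support := Finsupp.mem_support_iff.2 hne
  exact absurd (Finset.le_sup (f := id) this) (by simpa using h)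

section
variable {rw : FinPerm → List ℕ}

lemma red_rw (hrw_eq : ∀ w : FinPerm, wordPerm (rw w) = w.1)
    (hrw_red : ∀ w : FinPerm, ∀ l : List ℕ, wordPerm l = w.1 → (rw w).length ≤ l.length)
    (w : FinPerm) : Red (rw w) := fun l hl => hrw_red w l (by rw [hl, hrw_eq])

/-- The standard words act on the vector `e emp 1` by producing distinct basis vectors of `V`. -/
lemma act_stdWord (hrw_eq : ∀ w : FinPerm, wordPerm (rw w) = w.1)
    (hrw_red : ∀ w : FinPerm, ∀ l : List ℕ, wordPerm l = w.1 → (rw w).length ≤ l.length)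
    (u : ℕ →₀ List Bool) (w : FinPerm) :
    act (stdWord rw u w) (e emp 1) = e u w.1 := by
  rw [stdWord, map_mul, Module.End.mul_apply, act_Tword (red_rw hrw_eq hrw_red w), hrw_eq,
    act_uProd _ _ emp _ (fun _ _ => rfl)]
  congr 1
  funext j
  split_ifs with h
  · rfl
  · exact (eq_nil_of_lt (by omega)).symm

lemma linearIndependent_stdWord (hrw_eq : ∀ w : FinPerm, wordPerm (rw w) = w.1)
    (hrw_red : ∀ w : FinPerm, ∀ l : List ℕ, wordPerm l = w.1 → (rw w).length ≤ l.length) :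
    LinearIndependent Kfield
      (fun p : (ℕ →₀ List Bool) × FinPerm => stdWord rw p.1 p.2) := by
  refine LinearIndependent.of_comp
    ((LinearMap.applyₗ (R := Kfield) (e emp 1)).comp act.toLinearMap) ?_
  have hcomp : ((LinearMap.applyₗ (R := Kfield) (e emp 1)).comp act.toLinearMap) ∘
      (fun p : (ℕ →₀ List Bool) × FinPerm => stdWord rw p.1 p.2) =
      (fun p : Cfg × Equiv.Perm ℕ => Finsupp.single p (1 : Kfield)) ∘
        fun p : (ℕ →₀ List Bool) × FinPerm => ((p.1 : Cfg), p.2.1) :=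
    funext fun p => act_stdWord hrw_eq hrw_red p.1 p.2
  rw [hcomp]
  refine (Finsupp.linearIndependent_single_one Kfield (Cfg × Equiv.Perm ℕ)).comp _ ?_
  rintro ⟨u, w⟩ ⟨u', w'⟩ h
  simp only [Prod.mk.injEq] at h
  exact Prod.ext (DFunLike.coe_injective h.1) (Subtype.ext h.2)

end

/-! ### Relations in the stable limit DAHA -/

/-- The generator `T_i` (`b = true`) and its inverse (`b = false`) in `H⁺`. -/
def tb (i : ℕ) (b : Bool) : Hplus := if b then gen (HGen.T i) else gen (HGen.T' i)

lemma mk_rel {a b : FreeAlgebra Kfield HGen} (h : HRel a b) :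
    RingQuot.mkAlgHom Kfield HRel a = RingQuot.mkAlgHom Kfield HRel b :=
  RingQuot.mkAlgHom_rel Kfield h

lemma tb_mul (i b) : tb i b * tb i (!b) = 1 := by
  have h1 := mk_rel (HRel.TT' i)
  have h2 := mk_rel (HRel.T'T i)
  simp only [map_mul, map_one] at h1 h2
  cases b
  · exact h2
  · exact h1

lemma tb_mul' (i b) : tb i (!b) * tb i b = 1 := by simpa using tb_mul i (!b)

lemma tb_add (i b) : tb i b = tb i (!b) + hb b • 1 := by
  have h := mk_rel (HRel.TminusT' i)
  simp only [map_sub, Algebra.algebraMap_eq_smul_one, map_smul, map_one] at h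
  have h : tb i true - tb i false = hvar • 1 := h
  cases b
  · change tb i false = tb i true + (-hvar) • (1 : Hplus)
    have e : (-hvar) • (1 : Hplus) = -(hvar • (1 : Hplus)) := by
      rw [eq_neg_iff_add_eq_zero, ← add_smul, neg_add_cancel, zero_smul]
    rw [e, ← h]
    abel
  · change tb i true = tb i false + hvar • (1 : Hplus)
    rw [← h]
    abel

lemma tb_comm {i j : ℕ} (h : i + 1 < j) : tb i true * tb j true = tb j true * tb i true := by
  have h := mk_rel (HRel.Tcomm i j (Or.inl h))
  simp only [map_mul] at h
  exact h

lemma tb_braid (i : ℕ) : tb i true * tb (i + 1) true * tb i true =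
    tb (i + 1) true * tb i true * tb (i + 1) true := by
  have h := mk_rel (HRel.braid i)
  simp only [map_mul] at h
  exact h

lemma letter_succ (i b) :
    letterElem (i + 1) b = tb i (!b) * letterElem i b * tb i (!b) := by
  have h1 := mk_rel (HRel.TXT i)
  have h2 := mk_rel (HRel.TYT i)
  simp only [map_mul] at h1 h2
  cases b
  · exact h2.symm
  · exact h1.symm

lemma tb_letter {i j : ℕ} (h : j ≠ i) (h' : j ≠ i + 1) (a b) :
    tb i a * letterElem j b = letterElem j b * tb i a := by
  have key : tb i true * letterElem j b = letterElem j b * tb i true := by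
    have h1 := mk_rel (HRel.TX i j h h')
    have h2 := mk_rel (HRel.TY i j h h')
    simp only [map_mul] at h1 h2
    cases b
    · exact h2
    · exact h1
  cases a
  · have := tb_add i false
    rw [Bool.not_false] at this
    rw [this, add_mul, mul_add, key, smul_mul_assoc, mul_smul_comm, one_mul, mul_one]
  · exact key

lemma letter_comm (i b) : letterElem (i + 1) b * letterElem i b =
    letterElem i b * letterElem (i + 1) b := by
  have h1 := mk_rel (HRel.XX (i + 1) i)
  have h2 := mk_rel (HRel.YY (i + 1) i)
  simp only [map_mul] at h1 h2
  cases b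
  · exact h2
  · exact h1

/-- Moving `T_i^{±1}` past a letter in leg `i`. -/
lemma tb_letter_self (i b) :
    tb i (!b) * letterElem i b = letterElem (i + 1) b * tb i b := by
  rw [letter_succ, mul_assoc (tb i (!b) * _), tb_mul', mul_one]

/-- Moving `T_i^{±1}` past a letter in leg `i+1`. -/
lemma tb_letter_succ (i b) :
    tb i b * letterElem (i + 1) b = letterElem i b * tb i (!b) := by
  rw [letter_succ, ← mul_assoc, ← mul_assoc, tb_mul, one_mul]

/-- A step of the induction shifting the cross relation to higher indices. -/
lemma cross_shift {R : Type*} [Ring R] {t t' s s' x y x1 y1 x2 : R}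
    (hs' : s' * s = 1) (hs : s * s' = 1) (ht : t * t' = 1) (br : t * s * t = s * t * s)
    (hx1 : x1 = t' * x * t') (hy1 : y1 = t * y * t) (hx2 : x2 = s' * x1 * s')
    (hsx : s * x = x * s) (hsy : s * y = y * s) (htx : t * x2 = x2 * t)
    (hc : y * t * x = x1 * y * t) : y1 * s * x1 = x2 * y1 * s := by
  have br' : t * s * t' = s' * t * s :=
    calc t * s * t' = s' * (s * t * s) * t' := by
          simp only [← mul_assoc, hs', one_mul]
      _ = s' * t * s * (t * t') := by rw [← br]; simp only [mul_assoc]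
      _ = s' * t * s := by rw [ht, mul_one]
  have hsy' : s' * y = y * s' :=
    calc s' * y = s' * y * (s * s') := by rw [hs, mul_one]
      _ = s' * (y * s) * s' := by simp only [mul_assoc]
      _ = (s' * s) * y * s' := by rw [← hsy]; simp only [mul_assoc]
      _ = y * s' := by rw [hs', one_mul]
  calc y1 * s * x1 = t * y * (t * s * t') * x * t' := by rw [hx1, hy1]; simp only [mul_assoc]
    _ = t * (y * s') * t * (s * x) * t' := by rw [br']; simp only [mul_assoc]
    _ = t * s' * (y * t * x) * s * t' := by rw [← hsy', hsx]; simp only [mul_assoc]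
    _ = t * s' * x1 * y * (t * s * t') := by rw [hc]; simp only [mul_assoc]
    _ = t * s' * x1 * (y * s') * t * s := by rw [br']; simp only [mul_assoc]
    _ = t * (s' * x1 * s') * y * t * s := by rw [← hsy']; simp only [mul_assoc]
    _ = (t * x2) * y * t * s := by rw [← hx2]
    _ = x2 * y1 * s := by rw [htx, hy1]; simp only [mul_assoc]

/-- The relation `Y_i T_i X_i = X_{i+1} Y_i T_i` for all `i`. -/
lemma cross_all (i : ℕ) : letterElem i false * tb i true * letterElem i true =
    letterElem (i + 1) true * letterElem i false * tb i true := by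
  induction i with
  | zero =>
    have h := mk_rel HRel.cross
    simp only [map_mul] at h
    exact h
  | succ i ih =>
    exact cross_shift (tb_mul (i + 1) false) (tb_mul (i + 1) true) (tb_mul i true) (tb_braid i)
      (letter_succ i true) (letter_succ i false) (letter_succ (i + 1) true)
      (tb_letter (by omega) (by omega) _ _) (tb_letter (by omega) (by omega) _ _)
      (tb_letter (by omega) (by omega) _ _) ih

/-- The rule exchanging different letters in the legs `i`, `i+1`. -/
lemma letter_cross (i b) : letterElem (i + 1) b * letterElem i (!b) =
    letterElem i (!b) * letterElem (i + 1) b +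
      hb b • (letterElem i (!b) * (letterElem i b * tb i (!b))) := by
  have hc := cross_all i
  cases b
  · have e1 := letter_succ i false
    have e2 := tb_letter_succ i true
    have e3 := tb_add i false
    simp only [Bool.not_true, Bool.not_false] at e1 e2 e3 ⊢
    have e4 : letterElem i true * letterElem (i + 1) false =
        letterElem i true * (tb i true * letterElem i false * tb i true) := by rw [e1]
    calc letterElem (i + 1) false * letterElem i true
        = tb i true * (letterElem i false * tb i true * letterElem i true) := by
          rw [e1]; simp only [mul_assoc]
      _ = tb i true * letterElem (i + 1) true * letterElem i false * tb i true := by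
          rw [hc]; simp only [mul_assoc]
      _ = letterElem i true * tb i false * letterElem i false * tb i true := by rw [e2]
      _ = _ := by
          rw [e4, e3]
          simp only [mul_add, add_mul, mul_assoc, mul_smul_comm, smul_mul_assoc, one_mul]
  · have e1 := tb_letter_self i true
    have e2 := tb_add i true
    have e3 := tb_mul i true
    simp only [Bool.not_true] at e1 e2 e3 ⊢
    calc letterElem (i + 1) true * letterElem i false
        = letterElem (i + 1) true * letterElem i false * tb i true * tb i false := by
          rw [mul_assoc _ (tb i true), e3, mul_one]
      _ = letterElem i false * ((tb i false + hb true • 1) * letterElem i true) * tb i false := by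
          rw [← hc, ← e2]; simp only [mul_assoc]
      _ = letterElem i false * letterElem (i + 1) true * (tb i true * tb i false) +
          hb true • (letterElem i false * (letterElem i true * tb i false)) := by
          rw [add_mul, e1]
          simp only [mul_add, add_mul, mul_assoc, mul_smul_comm, smul_mul_assoc, one_mul]
      _ = _ := by rw [e3, mul_one]

/-- The permutation attached to a word moves finitely many points. -/
lemma fin_wordPerm (l : List ℕ) : {a | wordPerm l a ≠ a}.Finite := by
  induction l with
  | nil => simp [wordPerm]
  | cons i l ih =>
    refine (ih.union (Set.toFinite {i, i + 1})).subset ?_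
    intro a ha
    by_contra hc
    simp only [Set.mem_union, Set.mem_ofPred_eq, Set.mem_insert_iff, Set.mem_singleton_iff,
      not_or, not_not] at hc
    refine ha ?_
    rw [wordPerm_cons, Equiv.Perm.mul_apply, hc.1, swapAdj_of_ne hc.2.1 hc.2.2]

/-- The span of the elements `T_w`. -/
def Hk (rw : FinPerm → List ℕ) : Submodule Kfield Hplus :=
  Submodule.span Kfield (Set.range fun w => Tword (rw w))

section
variable {rw : FinPerm → List ℕ}

lemma Tword_mem (hrw_eq : ∀ w : FinPerm, wordPerm (rw w) = w.1)
    (hrw_red : ∀ w : FinPerm, ∀ l : List ℕ, wordPerm l = w.1 → (rw w).length ≤ l.length)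
    {l : List ℕ} (hl : Red l) : Tword l ∈ Hk rw := by
  let w : FinPerm := ⟨wordPerm l, fin_wordPerm l⟩
  have : Tword l = Tword (rw w) :=
    matsumoto (fun i => gen (HGen.T i)) (fun i j h => tb_comm h) tb_braid _ _ _ rfl hl
      (red_rw hrw_eq hrw_red w) (hrw_eq w).symm
  rw [this]
  exact Submodule.subset_span ⟨w, rfl⟩

/-- The span of the elements `T_w` is closed under left multiplication by each `T_i`. -/
lemma tb_mem_Hk (hrw_eq : ∀ w : FinPerm, wordPerm (rw w) = w.1)
    (hrw_red : ∀ w : FinPerm, ∀ l : List ℕ, wordPerm l = w.1 → (rw w).length ≤ l.length)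
    (i b) : ∀ g ∈ Hk rw, tb i b * g ∈ Hk rw := by
  have key : ∀ g ∈ Hk rw, tb i true * g ∈ Hk rw := by
    intro g hg
    have hle : Hk rw ≤ (Hk rw).comap (LinearMap.mulLeft Kfield (tb i true)) := by
      refine Submodule.span_le.2 ?_
      rintro _ ⟨w, rfl⟩
      change tb i true * Tword (rw w) ∈ Hk rw
      have hr := red_rw hrw_eq hrw_red w
      generalize rw w = l at hr
      have hcons : ∀ l, tb i true * Tword l = Tword (i :: l) := fun l => by simp [Tword, tb]
      rcases lt_or_gt_of_ne (inv_ne (wordPerm l) (show i ≠ i + 1 by omega)) with h | h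
      · rw [hcons]
        exact Tword_mem hrw_eq hrw_red (hr.cons h)
      · obtain ⟨k, h1, h2, -⟩ := hr.exists_cons h
        have hlk : Tword l = tb i true * Tword k := by
          rw [hcons]
          exact matsumoto (fun i => gen (HGen.T i)) (fun i j h => tb_comm h) tb_braid _ _ _ rfl hr
            h1 h2.symm
        have hq : tb i true * tb i true = 1 + hb true • tb i true := by
          have e := tb_add i true
          have e' := tb_mul i true
          rw [Bool.not_true] at e e'
          calc tb i true * tb i true = tb i true * (tb i false + hb true • 1) := by rw [← e]
            _ = _ := by rw [mul_add, e', mul_smul_comm, mul_one]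
        have : tb i true * Tword l = Tword k + hb true • Tword l := by
          rw [hlk, ← mul_assoc, hq, add_mul, one_mul, smul_mul_assoc]
        rw [this]
        exact Submodule.add_mem _ (Tword_mem hrw_eq hrw_red h1.tail)
          (Submodule.smul_mem _ _ (Tword_mem hrw_eq hrw_red hr))
    exact hle hg
  intro g hg
  cases b
  · have := tb_add i false
    rw [Bool.not_false] at this
    rw [this, add_mul, smul_mul_assoc, one_mul]
    exact Submodule.add_mem _ (key g hg) (Submodule.smul_mem _ _ hg)
  · exact key g hg

end

/-! ### The span of the standard words -/

/-- The product `u_k u_{k+1} ⋯` of the words in a list, in the legs `k`, `k+1`, …. -/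
def wProd : ℕ → List (List Bool) → Hplus
  | _, [] => 1
  | k, u :: us => wordElem k u * wProd (k + 1) us

lemma word_nil (k) : wordElem k [] = 1 := by simp [wordElem]
lemma word_cons (k b u) : wordElem k (b :: u) = letterElem k b * wordElem k u := by
  simp [wordElem]

lemma tb_word {i k : ℕ} (h : k ≠ i) (h' : k ≠ i + 1) (b u) :
    tb i b * wordElem k u = wordElem k u * tb i b := by
  induction u with
  | nil => simp [word_nil]
  | cons a u ih => rw [word_cons, ← mul_assoc, tb_letter h h', mul_assoc, ih, mul_assoc]

lemma tb_wProd (i b us) : ∀ k, i + 2 ≤ k → tb i b * wProd k us = wProd k us * tb i b := by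
  induction us with
  | nil => intro k _; simp [wProd]
  | cons u us ih =>
    intro k hk
    rw [wProd, ← mul_assoc, tb_word (by omega) (by omega), mul_assoc, ih _ (by omega), mul_assoc]

/-- The span of the standard words in which only the legs from `k` on are used. -/
def M (rw : FinPerm → List ℕ) (k : ℕ) : Submodule Kfield Hplus :=
  Submodule.span Kfield {x | ∃ us, ∃ g ∈ Hk rw, x = wProd k us * g}

/-- To check that left multiplication by `a` maps one span to another, it suffices to do so on
generators. -/
lemma mul_span {s : Set Hplus} {a : Hplus} {W : Submodule Kfield Hplus}
    (h : ∀ x ∈ s, a * x ∈ W) : ∀ x ∈ Submodule.span Kfield s, a * x ∈ W := by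
  intro x hx
  have hle : Submodule.span Kfield s ≤ W.comap (LinearMap.mulLeft Kfield a) :=
    Submodule.span_le.2 h
  exact hle hx

section
variable {rw : FinPerm → List ℕ}

lemma word_mul_mem (k u) : ∀ x ∈ M rw (k + 1), wordElem k u * x ∈ M rw k :=
  mul_span (by
    rintro _ ⟨us, g, hg, rfl⟩
    exact Submodule.subset_span ⟨u :: us, g, hg, by rw [wProd, mul_assoc]⟩)

lemma M_succ_le (k) : M rw (k + 1) ≤ M rw k := fun x hx => by
  simpa [word_nil] using word_mul_mem k [] x hx

lemma M_le {W : Submodule Kfield Hplus} (k)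
    (h : ∀ u, ∀ x ∈ M rw (k + 1), wordElem k u * x ∈ W) : M rw k ≤ W := by
  refine Submodule.span_le.2 ?_
  rintro _ ⟨us, g, hg, rfl⟩
  rcases us with _ | ⟨u, us⟩
  · have := h [] g (Submodule.subset_span ⟨[], g, hg, by simp [wProd]⟩)
    simpa [wProd, word_nil] using this
  · rw [wProd, mul_assoc]
    exact h u _ (Submodule.subset_span ⟨us, g, hg, rfl⟩)

lemma tb_M_gt (hH : ∀ i b, ∀ g ∈ Hk rw, tb i b * g ∈ Hk rw) {i k : ℕ} (hk : i + 2 ≤ k) (b) :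
    ∀ x ∈ M rw k, tb i b * x ∈ M rw k :=
  mul_span (by
    rintro _ ⟨us, g, hg, rfl⟩
    exact Submodule.subset_span ⟨us, _, hH i b g hg, by
      rw [← mul_assoc, tb_wProd i b us k hk, mul_assoc]⟩)

/-- The span of the standard words in which only the legs from `i` on are used, with at most `n`
letters in the legs `i`, `i+1`. -/
def E (rw : FinPerm → List ℕ) (i n : ℕ) : Submodule Kfield Hplus :=
  Submodule.span Kfield {x | ∃ p q, p.length + q.length ≤ n ∧ ∃ m ∈ M rw (i + 2),
    x = wordElem i p * (wordElem (i + 1) q * m)}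

lemma mem_E {i n : ℕ} {p q m} (h : p.length + q.length ≤ n) (hm : m ∈ M rw (i + 2)) :
    wordElem i p * (wordElem (i + 1) q * m) ∈ E rw i n :=
  Submodule.subset_span ⟨p, q, h, m, hm, rfl⟩

lemma E_mono {i m n : ℕ} (h : m ≤ n) : E rw i m ≤ E rw i n :=
  Submodule.span_mono (by
    rintro _ ⟨p, q, hpq, m, hm, rfl⟩
    exact ⟨p, q, hpq.trans h, m, hm, rfl⟩)

lemma letter_mem_E (i n b) : ∀ x ∈ E rw i n, letterElem i b * x ∈ E rw i (n + 1) :=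
  mul_span (by
    rintro _ ⟨p, q, hpq, m, hm, rfl⟩
    rw [← mul_assoc, ← word_cons]
    exact mem_E (by simp only [List.length_cons]; omega) hm)

lemma tb_flip {W : Submodule Kfield Hplus} {i : ℕ} {x : Hplus} (hx : x ∈ W) (c)
    (h : tb i c * x ∈ W) (b) : tb i b * x ∈ W := by
  rcases eq_or_ne b c with rfl | hbc
  · exact h
  · obtain rfl : c = !b := by cases b <;> cases c <;> simp_all
    rw [tb_add, add_mul, smul_mul_assoc, one_mul]
    exact W.add_mem h (W.smul_mem _ hx)

/-- Left multiplication by `T_i^{±1}` preserves the filtration by the number of letters in the legs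
`i`, `i+1`, and left multiplication by a letter in leg `i+1` raises it by at most one. -/
lemma E_closed (hH : ∀ i b, ∀ g ∈ Hk rw, tb i b * g ∈ Hk rw) (i : ℕ) : ∀ n,
    (∀ b, ∀ x ∈ E rw i n, tb i b * x ∈ E rw i n) ∧
    ∀ b, ∀ x ∈ E rw i n, letterElem (i + 1) b * x ∈ E rw i (n + 1) := by
  intro n
  induction n with
  | zero =>
    refine ⟨fun b => mul_span ?_, fun b => mul_span ?_⟩ <;> rintro _ ⟨p, q, hpq, m, hm, rfl⟩
    all_goals
      obtain rfl : p = [] := List.length_eq_zero_iff.1 (by omega)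
      obtain rfl : q = [] := List.length_eq_zero_iff.1 (by omega)
    · have := mem_E (n := 0) (p := []) (q := []) (by simp) (tb_M_gt hH le_rfl b m hm)
      simpa [word_nil] using this
    · have := mem_E (n := 0 + 1) (p := []) (q := [b]) (by simp) hm
      simpa [word_nil, word_cons] using this
  | succ n ih =>
    refine ⟨fun b => mul_span ?_, fun b => mul_span ?_⟩ <;> rintro _ ⟨p, q, hpq, m, hm, rfl⟩
    · have hx := mem_E hpq hm
      rcases p with _ | ⟨a, p⟩
      · rcases q with _ | ⟨a, q⟩
        · have := mem_E (n := n + 1) (p := []) (q := []) (by simp) (tb_M_gt hH le_rfl b m hm)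
          simpa [word_nil] using this
        · refine tb_flip hx a ?_ b
          have hy := mem_E (n := n) (p := []) (q := q)
            (by simp only [List.length_nil, List.length_cons] at hpq ⊢; omega) hm
          rw [word_nil, one_mul] at hy ⊢
          rw [word_cons, mul_assoc, ← mul_assoc, tb_letter_succ, mul_assoc]
          exact letter_mem_E i n a _ (ih.1 _ _ hy)
      · refine tb_flip hx (!a) ?_ b
        have hy := mem_E (n := n) (p := p) (q := q)
          (by simp only [List.length_cons] at hpq; omega) hm
        rw [word_cons, mul_assoc, ← mul_assoc, tb_letter_self, mul_assoc]
        exact ih.2 a _ (ih.1 a _ hy)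
    · rcases p with _ | ⟨a, p⟩
      · have := mem_E (n := n + 1 + 1) (p := []) (q := b :: q)
          (by simp only [List.length_nil, List.length_cons] at hpq ⊢; omega) hm
        simpa [word_nil, word_cons, mul_assoc] using this
      · have hy := mem_E (n := n) (p := p) (q := q)
          (by simp only [List.length_cons] at hpq; omega) hm
        rw [word_cons, mul_assoc, ← mul_assoc]
        rcases eq_or_ne a b with rfl | hab
        · rw [letter_comm, mul_assoc]
          exact letter_mem_E i (n + 1) a _ (ih.2 a _ hy)
        · obtain rfl : a = !b := by cases a <;> cases b <;> simp_all
          rw [letter_cross, add_mul, mul_assoc, smul_mul_assoc, mul_assoc, mul_assoc]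
          exact Submodule.add_mem _ (letter_mem_E i (n + 1) _ _ (ih.2 b _ hy))
            (Submodule.smul_mem _ _ (letter_mem_E i (n + 1) _ _
              (letter_mem_E i n b _ (ih.1 _ _ hy))))

lemma E_le (i n) : E rw i n ≤ M rw i := by
  refine Submodule.span_le.2 ?_
  rintro _ ⟨p, q, -, m, hm, rfl⟩
  exact word_mul_mem _ _ _ (word_mul_mem _ _ _ hm)

lemma tb_M (hH : ∀ i b, ∀ g ∈ Hk rw, tb i b * g ∈ Hk rw) (i b) : ∀ d k, k + d = i →
    ∀ x ∈ M rw k, tb i b * x ∈ M rw k := by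
  intro d
  induction d with
  | zero =>
    rintro k rfl x hx
    have h1 : M rw k ≤ (M rw k).comap (LinearMap.mulLeft Kfield (tb k b)) := by
      refine M_le k fun p x hx => ?_
      have h2 : M rw (k + 1) ≤ ((M rw k).comap (LinearMap.mulLeft Kfield (tb k b))).comap
          (LinearMap.mulLeft Kfield (wordElem k p)) := by
        refine M_le (k + 1) fun q m hm => ?_
        exact E_le k _ ((E_closed hH k _).1 b _ (mem_E le_rfl hm))
      exact h2 hx
    exact h1 hx
  | succ d ih =>
    intro k hk x hx
    have h1 : M rw k ≤ (M rw k).comap (LinearMap.mulLeft Kfield (tb i b)) := by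
      refine M_le k fun p x hx => ?_
      change tb i b * (wordElem k p * x) ∈ M rw k
      rw [← mul_assoc, tb_word (by omega) (by omega), mul_assoc]
      exact word_mul_mem _ _ _ (ih (k + 1) (by omega) x hx)
    exact h1 hx

lemma letter_M (hH : ∀ i b, ∀ g ∈ Hk rw, tb i b * g ∈ Hk rw) (b) : ∀ i,
    ∀ x ∈ M rw 0, letterElem i b * x ∈ M rw 0 := by
  intro i
  induction i with
  | zero =>
    intro x hx
    have h1 : M rw 0 ≤ (M rw 0).comap (LinearMap.mulLeft Kfield (letterElem 0 b)) := by
      refine M_le 0 fun p x hx => ?_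
      change letterElem 0 b * (wordElem 0 p * x) ∈ M rw 0
      rw [← mul_assoc, ← word_cons]
      exact word_mul_mem _ _ _ hx
    exact h1 hx
  | succ i ih =>
    intro x hx
    rw [letter_succ, mul_assoc, mul_assoc]
    exact tb_M hH i _ i 0 (by omega) _ (ih _ (tb_M hH i _ i 0 (by omega) _ hx))

lemma M_eq_top (hH : ∀ i b, ∀ g ∈ Hk rw, tb i b * g ∈ Hk rw) (h1 : 1 ∈ Hk rw) :
    M rw 0 = ⊤ := by
  rw [eq_top_iff]
  rintro x -
  obtain ⟨a, rfl⟩ := RingQuot.mkAlgHom_surjective Kfield HRel x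
  have key : ∀ x ∈ M rw 0, RingQuot.mkAlgHom Kfield HRel a * x ∈ M rw 0 := by
    induction a using FreeAlgebra.induction with
    | grade0 r =>
      intro x hx
      rw [AlgHom.commutes, ← Algebra.smul_def]
      exact Submodule.smul_mem _ _ hx
    | grade1 g =>
      intro x hx
      cases g with
      | T i => exact tb_M hH i true i 0 (by omega) x hx
      | T' i => exact tb_M hH i false i 0 (by omega) x hx
      | X i => exact letter_M hH true i x hx
      | Y i => exact letter_M hH false i x hx
    | mul a b ha hb =>
      intro x hx
      rw [map_mul, mul_assoc]
      exact ha _ (hb _ hx)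
    | add a b ha hb =>
      intro x hx
      rw [map_add, add_mul]
      exact Submodule.add_mem _ (ha _ hx) (hb _ hx)
  have := key 1 (Submodule.subset_span ⟨[], 1, h1, by simp [wProd]⟩)
  rwa [mul_one] at this

lemma wProd_eq (us) : ∀ k, wProd k us =
    ((List.range us.length).map fun j => wordElem (k + j) (us.getD j [])).prod := by
  induction us with
  | nil => intro k; simp [wProd]
  | cons u us ih =>
    intro k
    rw [wProd, ih, List.length_cons, List.range_succ_eq_map, List.map_cons, List.prod_cons,
      List.map_map]
    congr 2
    refine List.map_congr_left fun j _ => ?_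
    simp only [Function.comp, List.getD_cons_succ]
    congr 1
    omega

lemma uProd_add (u : ℕ →₀ List Bool) {k : ℕ} (h : ∀ j, k ≤ j → u j = []) (d : ℕ) :
    uProd u (k + d) = uProd u k := by
  induction d with
  | zero => rfl
  | succ d ih =>
    have : uProd u (k + (d + 1)) = uProd u (k + d) * wordElem (k + d) (u (k + d)) := by
      rw [← add_assoc]
      simp [uProd, List.range_succ]
    rw [this, ih, h _ (by omega), word_nil, mul_one]

lemma uProd_eq (u : ℕ →₀ List Bool) {k : ℕ} (h : ∀ j, k ≤ j → u j = []) :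
    uProd u (u.support.sup id + 1) = uProd u k := by
  rw [← uProd_add u h (u.support.sup id + 1), add_comm k,
    uProd_add u (k := u.support.sup id + 1) fun j hj => eq_nil_of_lt (by omega)]

/-- The finitely supported assignment of words given by a list of words. -/
def listFun (us : List (List Bool)) : ℕ →₀ List Bool :=
  Finsupp.onFinset (Finset.range us.length) (fun j => us.getD j []) fun j hj => by
    by_contra hc
    rw [Finset.mem_range, not_lt] at hc
    exact hj (List.getD_eq_default _ _ hc)

lemma stdWord_listFun (us) (w : FinPerm) :
    wProd 0 us * Tword (rw w) = stdWord rw (listFun us) w := by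
  rw [stdWord, uProd_eq (k := us.length) _ (fun j hj => List.getD_eq_default _ _ hj), wProd_eq]
  simp only [zero_add]
  rfl

lemma span_stdWord (hrw_eq : ∀ w : FinPerm, wordPerm (rw w) = w.1)
    (hrw_red : ∀ w : FinPerm, ∀ l : List ℕ, wordPerm l = w.1 → (rw w).length ≤ l.length) :
    Submodule.span Kfield
      (Set.range (fun p : (ℕ →₀ List Bool) × FinPerm => stdWord rw p.1 p.2)) = ⊤ := by
  have h1 : 1 ∈ Hk rw := by
    have : Tword [] ∈ Hk rw := Tword_mem hrw_eq hrw_red fun l _ => by simp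
    simpa [Tword] using this
  rw [eq_top_iff, ← M_eq_top (tb_mem_Hk hrw_eq hrw_red) h1]
  refine Submodule.span_le.2 ?_
  rintro _ ⟨us, g, hg, rfl⟩
  refine mul_span ?_ g hg
  rintro _ ⟨w, rfl⟩
  exact Submodule.subset_span ⟨(listFun us, w), (stdWord_listFun us w).symm⟩

end

end StdBasis

/-- The standard words form a basis of `H⁺` as a `K`-vector space: the family indexed by pairs
`(u, w)`, with `u` a finitely supported assignment of a word in `{X_i, Y_i}` to each index `i`
and `w` a finitary permutation, is linearly independent and spans `H⁺`.  Here `rw` is a fixed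
choice of reduced expression for each such permutation. -/
theorem statement0 (rw : FinPerm → List ℕ)
    (hrw_eq : ∀ w : FinPerm, wordPerm (rw w) = w.1)
    (hrw_red : ∀ w : FinPerm, ∀ l : List ℕ, wordPerm l = w.1 → (rw w).length ≤ l.length) :
    LinearIndependent Kfield
        (fun p : (ℕ →₀ List Bool) × FinPerm => stdWord rw p.1 p.2) ∧
      Submodule.span Kfield
        (Set.range (fun p : (ℕ →₀ List Bool) × FinPerm => stdWord rw p.1 p.2)) = ⊤ :=
  ⟨StdBasis.linearIndependent_stdWord hrw_eq hrw_red, StdBasis.span_stdWord hrw_eq hrw_red⟩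

end
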